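/- arXiv:0805.2104 — 3 statements merged into one kernel-verified Lean document; each statement's English description precedes it below -/
import Mathlib

section
/- Suppose there exists ρ > 0 such that every characteristic zero λ satisfies Re λ ≤ −ρ. Let x be a solution of the perturbed equation with ‖F(t)‖ ≤ γ(t)·‖x_t‖ for all t ≥ 0, where γ : [0,∞) → [0,∞) is continuous and there exists a > 0 with e^{a t} γ(t) → 0 as t → ∞. Then x converges to zero exponentially: there exist M > 0 and c > 0 such that ‖x(t)‖ ≤ M e^{−c t} for all t ≥ 0. -/
open Filter MeasureTheory

/-- Multiplication of a vector of `EuclideanSpace ℂ (Fin n)` by a matrix. -/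
noncomputable def mulVecE {n : ℕ} (A : Matrix (Fin n) (Fin n) ℂ)
    (v : EuclideanSpace ℂ (Fin n)) : EuclideanSpace ℂ (Fin n) :=
  Matrix.toEuclideanLin A v

/-- `‖x_t‖ = sup_{τ ∈ [t-H, t]} ‖x τ‖`. -/
noncomputable def slidingSup {n : ℕ} (H : ℝ) (x : ℝ → EuclideanSpace ℂ (Fin n)) (t : ℝ) : ℝ :=
  sSup ((fun τ => ‖x τ‖) '' Set.Icc (t - H) t)

/-- Characteristic function `Δ(s) = det (s I - Σ_i A_i e^{-h_i s})` of the linear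
delay equation `y'(t) = Σ_i A_i y(t - h_i)`. -/
noncomputable def charFn {n m : ℕ} (A : Fin (m + 1) → Matrix (Fin n) (Fin n) ℂ)
    (hd : Fin (m + 1) → ℝ) (s : ℂ) : ℂ :=
  Matrix.det (s • (1 : Matrix (Fin n) (Fin n) ℂ) - ∑ i, Complex.exp (-(hd i : ℂ) * s) • A i)


set_option linter.unusedSectionVars false

section gen
open FourierTransform SchwartzMap
open scoped ContDiff

variable {E : Type*} [NormedAddCommGroup E] [InnerProductSpace ℂ E] [CompleteSpace E]

lemma plancherel_aux {f : ℝ → E} (hf : Integrable f) (hf2 : MemLp f 2) :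
    eLpNorm (𝓕 f) 2 volume = eLpNorm f 2 volume := by
  have hcont : Continuous (𝓕 f) :=
    VectorFourier.fourierIntegral_continuous Real.continuous_fourierChar (by fun_prop) hf
  have key : ∀ᵐ t : ℝ, (𝓕 (hf2.toLp f) : Lp E 2 (volume : Measure ℝ)) t = 𝓕 f t := by
    apply ae_eq_of_integral_contDiff_smul_eq
    · exact (Lp.memLp _).locallyIntegrable (by norm_num)
    · exact hcont.locallyIntegrable
    · intro g g_smooth g_cpt
      have hg₁ : HasCompactSupport (Complex.ofRealCLM ∘ g) := g_cpt.comp_left rfl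
      have hg₂ : ContDiff ℝ ∞ (Complex.ofRealCLM ∘ g) := by fun_prop
      set G : 𝓢(ℝ, ℂ) := hg₁.toSchwartzMap hg₂ with hG
      have e1 : ∫ t, g t • (𝓕 (hf2.toLp f) : Lp E 2 (volume : Measure ℝ)) t
          = Lp.toTemperedDistribution (𝓕 (hf2.toLp f) : Lp E 2 (volume : Measure ℝ)) G := by
        simp [hG]
      rw [e1, ← Lp.fourier_toTemperedDistribution_eq, TemperedDistribution.fourier_apply,
        Lp.toTemperedDistribution_apply]
      have e2 : ∫ t, (𝓕 G) t • (hf2.toLp f) t = ∫ t, (𝓕 (G : ℝ → ℂ)) t • f t := by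
        apply integral_congr_ae
        filter_upwards [hf2.coeFn_toLp] with t ht
        rw [ht, SchwartzMap.fourier_coe]
      rw [e2]
      have e3 := VectorFourier.integral_fourierIntegral_smul_eq_flip (μ := volume) (ν := volume)
        (f := (G : ℝ → ℂ)) (g := f) (L := innerₗ ℝ) Real.continuous_fourierChar
        (by fun_prop) G.integrable hf
      rw [flip_innerₗ] at e3
      refine e3.trans ?_
      apply integral_congr_ae
      filter_upwards with t
      simp [hG]
      rfl
  rw [← eLpNorm_congr_ae key, ← eLpNorm_congr_ae hf2.coeFn_toLp]
  have := Lp.norm_fourier_eq (hf2.toLp f)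
  rw [Lp.norm_def, Lp.norm_def] at this
  exact (ENNReal.toReal_eq_toReal_iff' (Lp.eLpNorm_ne_top _) (Lp.eLpNorm_ne_top _)).1 this

/-- shift -/
lemma fourier_shift_aux (f : ℝ → E) (h ξ : ℝ) :
    𝓕 (fun t => f (t - h)) ξ = Complex.exp (-(h:ℂ) * (2 * Real.pi * Complex.I * ξ)) • 𝓕 f ξ := by
  rw [Real.fourier_real_eq_integral_exp_smul, Real.fourier_real_eq_integral_exp_smul,
    ← integral_smul]
  conv_rhs => rw [← integral_sub_right_eq_self _ h]
  congr 1; ext t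
  rw [smul_smul, ← Complex.exp_add]
  congr 2
  push_cast; ring

lemma fourier_clm_aux (L : E →L[ℂ] E) {f : ℝ → E} (hf : Integrable f) (ξ : ℝ) :
    𝓕 (fun t => L (f t)) ξ = L (𝓕 f ξ) := by
  rw [Real.fourier_real_eq_integral_exp_smul, Real.fourier_real_eq_integral_exp_smul,
    ← L.integral_comp_comm]
  · simp
  · simpa [Real.fourierChar_apply, Circle.smul_def, mul_assoc, mul_comm, mul_left_comm] using
      (Real.fourierIntegral_convergent_iff (V := ℝ) (f := f) ξ).2 hf

lemma fourier_add_aux {f g : ℝ → E} (hf : Integrable f) (hg : Integrable g) (ξ : ℝ) :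
    𝓕 (fun t => f t + g t) ξ = 𝓕 f ξ + 𝓕 g ξ := by
  simp only [Real.fourier_eq]
  rw [← integral_add]
  · simp
  · exact (Real.fourierIntegral_convergent_iff (V := ℝ) (f := f) ξ).2 hf
  · exact (Real.fourierIntegral_convergent_iff (V := ℝ) (f := g) ξ).2 hg

lemma fourier_sub_aux {f g : ℝ → E} (hf : Integrable f) (hg : Integrable g) (ξ : ℝ) :
    𝓕 (fun t => f t - g t) ξ = 𝓕 f ξ - 𝓕 g ξ := by
  simp only [Real.fourier_eq]
  rw [← integral_sub]
  · simp [smul_sub]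
  · exact (Real.fourierIntegral_convergent_iff (V := ℝ) (f := f) ξ).2 hf
  · exact (Real.fourierIntegral_convergent_iff (V := ℝ) (f := g) ξ).2 hg

lemma fourier_sum_aux {ι : Type*} (s : Finset ι) {f : ι → ℝ → E} (hf : ∀ i, Integrable (f i))
    (ξ : ℝ) : 𝓕 (fun t => ∑ i ∈ s, f i t) ξ = ∑ i ∈ s, 𝓕 (f i) ξ := by
  simp only [Real.fourier_eq]
  rw [← integral_finsetSum]
  · simp [Finset.smul_sum]
  · exact fun i _ => (Real.fourierIntegral_convergent_iff (V := ℝ) (f := f i) ξ).2 (hf i)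

variable {ι : Type*} [Fintype ι]

/-- A priori estimate. -/
lemma apriori_aux (L : ι → E →L[ℂ] E) (hd : ι → ℝ) (κ : ℝ) (hκ : 0 < κ) (β : ℝ)
    (hM : ∀ s : ℂ, s.re = β → ∀ w : E,
      κ * ‖w‖ ≤ ‖s • w - ∑ i, Complex.exp (-(hd i : ℂ) * s) • L i w‖)
    {v : ℝ → E} (hv : Differentiable ℝ v) (hv1 : Integrable v) (hv2 : MemLp v 2)
    (hv1' : Integrable (deriv v)) (hv2' : MemLp (deriv v) 2) :
    ENNReal.ofReal κ * eLpNorm v 2 volume ≤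
      eLpNorm (fun t => deriv v t + (β : ℂ) • v t -
        ∑ i, Complex.exp (-(hd i : ℂ) * β) • L i (v (t - hd i))) 2 volume := by
  have hi1 : ∀ i, Integrable (fun t => Complex.exp (-(hd i : ℂ) * β) • L i (v (t - hd i))) :=
    fun i => ((L i).integrable_comp (hv1.comp_sub_right (hd i))).smul (Complex.exp (-(hd i : ℂ) * β))
  have hi2 : ∀ i, MemLp (fun t => Complex.exp (-(hd i : ℂ) * β) • L i (v (t - hd i))) 2 := by
    intro i
    have h1 : MemLp (fun t => v (t - hd i)) 2 :=
      hv2.comp_measurePreserving (measurePreserving_sub_right volume (hd i))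
    exact ((L i).comp_memLp' h1).const_smul _
  have hs1 : Integrable (fun t => ∑ i, Complex.exp (-(hd i : ℂ) * β) • L i (v (t - hd i))) :=
    integrable_finsetSum _ fun i _ => hi1 i
  have hs2 : MemLp (fun t => ∑ i, Complex.exp (-(hd i : ℂ) * β) • L i (v (t - hd i))) 2 :=
    memLp_finsetSum _ fun i _ => hi2 i
  have ha1 : Integrable (fun t => deriv v t + (β : ℂ) • v t) := hv1'.add (hv1.smul (β : ℂ))
  have hb1 : Integrable (fun t => (β : ℂ) • v t) := hv1.smul (β : ℂ)
  have hG1 := ha1.sub hs1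
  have hG2 := (hv2'.add (hv2.const_smul (β : ℂ))).sub hs2
  rw [← plancherel_aux hv1 hv2]
  have hP := plancherel_aux hG1 hG2
  have hP' : eLpNorm (fun t => deriv v t + (β : ℂ) • v t -
        ∑ i, Complex.exp (-(hd i : ℂ) * β) • L i (v (t - hd i))) 2 volume =
      eLpNorm (𝓕 (fun t => deriv v t + (β : ℂ) • v t -
        ∑ i, Complex.exp (-(hd i : ℂ) * β) • L i (v (t - hd i)))) 2 volume := hP.symm
  rw [hP']
  have e : ENNReal.ofReal κ * eLpNorm (𝓕 v) 2 volume = eLpNorm (fun ξ => (κ : ℂ) • 𝓕 v ξ) 2 volume := by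
    rw [show (fun ξ => (κ : ℂ) • 𝓕 v ξ) = (κ : ℂ) • 𝓕 v from rfl, eLpNorm_const_smul]
    congr 1
    rw [← ofReal_norm]; simp [abs_of_pos hκ]
  rw [e]
  apply eLpNorm_mono
  intro ξ
  rw [fourier_sub_aux ha1 hs1, fourier_add_aux hv1' hb1, fourier_sum_aux _ hi1,
    Real.fourier_deriv hv1 hv hv1']
  rw [norm_smul, Complex.norm_real, Real.norm_of_nonneg hκ.le]
  refine (hM (β + 2 * Real.pi * Complex.I * ξ) (by simp) (𝓕 v ξ)).trans (le_of_eq ?_)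
  congr 1
  congr 1
  · rw [add_smul, add_comm]
    congr 1
    exact (fourier_clm_aux ((β : ℂ) • ContinuousLinearMap.id ℂ E) hv1 ξ).symm
  · refine Finset.sum_congr rfl fun i _ => ?_
    have := fourier_clm_aux (Complex.exp (-(hd i : ℂ) * β) • L i) (hv1.comp_sub_right (hd i)) ξ
    simp only [smul_apply] at this
    rw [this, fourier_shift_aux, map_smul, smul_smul, mul_add, Complex.exp_add]


/-- Sobolev type bound. -/
lemma sup_aux {v : ℝ → E} (hv : Differentiable ℝ v) (hv0 : ∀ t ≤ 1, v t = 0) (hv2 : MemLp v 2)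
    (hv2' : MemLp (deriv v) 2) (t : ℝ) :
    ‖v t‖ ^ 2 ≤ (eLpNorm v 2 volume).toReal ^ 2 + (eLpNorm (deriv v) 2 volume).toReal ^ 2 := by
  let _ : InnerProductSpace ℝ E := InnerProductSpace.rclikeToReal ℂ E
  have hsq : ∀ f : ℝ → E, MemLp f 2 → (eLpNorm f 2 volume).toReal ^ 2 = ∫ t, ‖f t‖ ^ 2 := by
    intro f hf
    have h0 : 0 ≤ ∫ t, ‖f t‖ ^ 2 := integral_nonneg fun t => by positivity
    rw [hf.eLpNorm_eq_integral_rpow_norm (by norm_num) (by norm_num)]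
    simp only [ENNReal.toReal_ofNat, Real.rpow_ofNat]
    rw [ENNReal.toReal_ofReal (by positivity), ← Real.rpow_natCast, ← Real.rpow_mul h0]
    norm_num
  rw [hsq v hv2, hsq _ hv2']
  have i1 : Integrable (fun t => ‖v t‖ ^ 2) := hv2.integrable_norm_pow (by norm_num)
  have i2 : Integrable (fun t => ‖deriv v t‖ ^ 2) := hv2'.integrable_norm_pow (by norm_num)
  rw [← integral_add i1 i2]
  rcases le_total t 1 with h | h
  · rw [hv0 t h]; simp only [norm_zero]
    norm_num
    exact integral_nonneg fun t => by positivity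
  have hb : ∀ t, ‖2 * inner ℝ (v t) (deriv v t)‖ ≤ ‖v t‖ ^ 2 + ‖deriv v t‖ ^ 2 := by
    intro t
    have := norm_inner_le_norm (𝕜 := ℝ) (v t) (deriv v t)
    rw [norm_mul]; norm_num
    norm_num at this
    nlinarith [sq_nonneg (‖v t‖ - ‖deriv v t‖)]
  have hd : ∀ t, HasDerivAt (fun t => ‖v t‖ ^ 2) (2 * inner ℝ (v t) (deriv v t)) t :=
    fun t => (hv t).hasDerivAt.norm_sq
  have hmeas : AEStronglyMeasurable (fun t => 2 * inner ℝ (v t) (deriv v t)) volume :=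
    (hv2.1.inner hv2'.1).const_mul 2
  have hintg : Integrable (fun t => 2 * inner ℝ (v t) (deriv v t)) :=
    (i1.add i2).mono' hmeas (Eventually.of_forall hb)
  have ftc := intervalIntegral.integral_eq_sub_of_hasDerivAt (a := 1) (b := t)
    (fun s _ => hd s) hintg.intervalIntegrable
  rw [hv0 1 le_rfl] at ftc
  simp only [norm_zero, ne_eq, OfNat.ofNat_ne_zero, not_false_eq_true, zero_pow, sub_zero] at ftc
  rw [← ftc, intervalIntegral.integral_of_le h]
  calc _ ≤ ∫ s in Set.Ioc 1 t, ‖v s‖ ^ 2 + ‖deriv v s‖ ^ 2 := by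
        apply integral_mono hintg.integrableOn (i1.add i2).integrableOn
        intro s
        exact (le_abs_self _).trans (hb s)
    _ ≤ _ := setIntegral_le_integral (i1.add i2) (Eventually.of_forall fun s => by
        simp only [Pi.zero_apply]; positivity)

lemma kappa_aux [FiniteDimensional ℂ E] (L : ι → E →L[ℂ] E) (hd : ι → ℝ) (hdnn : ∀ i, 0 ≤ hd i)
    (hinj : ∀ s : ℂ, 0 ≤ s.re → ∀ w : E,
      s • w - ∑ i, Complex.exp (-(hd i : ℂ) * s) • L i w = 0 → w = 0) :
    ∃ κ > 0, ∀ s : ℂ, 0 ≤ s.re → ∀ w : E,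
      κ * ‖w‖ ≤ ‖s • w - ∑ i, Complex.exp (-(hd i : ℂ) * s) • L i w‖ := by
  have : ProperSpace E := FiniteDimensional.proper ℂ E
  set f : ℂ × E → E := fun p => p.1 • p.2 - ∑ i, Complex.exp (-(hd i : ℂ) * p.1) • L i p.2 with hf
  have hfc : Continuous f := by fun_prop
  set S := ∑ i, ‖L i‖ with hS
  have hS0 : 0 ≤ S := by positivity
  have hbig : ∀ s : ℂ, 0 ≤ s.re → S + 1 ≤ ‖s‖ → ∀ w : E, ‖w‖ ≤ ‖f (s, w)‖ := by
    intro s hs hs1 w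
    have h1 : ‖∑ i, Complex.exp (-(hd i : ℂ) * s) • L i w‖ ≤ S * ‖w‖ := by
      rw [hS, Finset.sum_mul]
      refine norm_sum_le_of_le _ fun i _ => ?_
      rw [norm_smul, Complex.norm_exp]
      have : Real.exp (-(hd i : ℂ) * s).re ≤ 1 := by
        rw [Real.exp_le_one_iff]
        simp
        exact mul_nonneg (hdnn i) hs
      calc _ ≤ 1 * (‖L i‖ * ‖w‖) := by
            gcongr
            exact (L i).le_opNorm w
        _ = _ := one_mul _
    have h2 := norm_sub_norm_le (s • w) (∑ i, Complex.exp (-(hd i : ℂ) * s) • L i w)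
    rw [norm_smul] at h2
    simp only [hf]
    nlinarith [norm_nonneg w]
  set K : Set (ℂ × E) := (Metric.closedBall 0 (S + 1) ∩ {s : ℂ | 0 ≤ s.re}) ×ˢ Metric.sphere 0 1 with hK
  have hKc : IsCompact K :=
    ((isCompact_closedBall 0 (S+1)).inter_right (isClosed_le continuous_const Complex.continuous_re)).prod
      (isCompact_sphere 0 1)
  have hpos : ∃ κ > 0, ∀ p ∈ K, κ ≤ ‖f p‖ := by
    rcases K.eq_empty_or_nonempty with h | h
    · exact ⟨1, one_pos, by simp [h]⟩
    · obtain ⟨p, hp, hmin⟩ := hKc.exists_isMinOn h hfc.norm.continuousOn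
      refine ⟨‖f p‖, ?_, fun q hq => hmin hq⟩
      rw [gt_iff_lt, norm_pos_iff]
      intro h0
      have := hinj p.1 hp.1.2 p.2 h0
      have h2 := hp.2
      rw [this] at h2
      simp at h2
  obtain ⟨κ, hκ, hκK⟩ := hpos
  refine ⟨min κ 1, by positivity, fun s hs w => ?_⟩
  rcases le_total (S + 1) ‖s‖ with h | h
  · calc _ ≤ 1 * ‖w‖ := by gcongr; exact min_le_right _ _
      _ = ‖w‖ := one_mul _
      _ ≤ _ := hbig s hs h w
  · rcases eq_or_ne w 0 with rfl | hw
    · simp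
    · have hw' : ‖w‖ ≠ 0 := by simpa using hw
      have h1 := hκK (s, ((‖w‖⁻¹ : ℝ) : ℂ) • w) ⟨⟨by simpa using h, hs⟩, by
        simp [norm_smul, hw']⟩
      have h2 : f (s, ((‖w‖⁻¹ : ℝ) : ℂ) • w) = ((‖w‖⁻¹ : ℝ) : ℂ) • f (s, w) := by
        simp only [hf, map_smul, smul_sub, Finset.smul_sum]
        congr 1
        · rw [smul_comm]
        · exact Finset.sum_congr rfl fun i _ => by rw [smul_comm]
      rw [h2, norm_smul, Complex.norm_real, norm_inv, norm_norm] at h1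
      have h3 : κ * ‖w‖ ≤ ‖f (s, w)‖ := by
        calc κ * ‖w‖ ≤ (‖w‖⁻¹ * ‖f (s, w)‖) * ‖w‖ := by gcongr
          _ = _ := by field_simp
      exact (mul_le_mul_of_nonneg_right (min_le_left _ _) (norm_nonneg _)).trans h3

/-- Combination. -/
lemma comb_aux (L : ι → E →L[ℂ] E) (hd : ι → ℝ) (κ : ℝ) (hκ : 0 < κ) (β : ℝ)
    (hM : ∀ s : ℂ, s.re = β → ∀ w : E,
      κ * ‖w‖ ≤ ‖s • w - ∑ i, Complex.exp (-(hd i : ℂ) * s) • L i w‖)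
    (η : ℝ) (hη0 : 0 ≤ η) (hη : η * Fintype.card ι ≤ κ / 2)
    (R : ℝ → ℝ) (hR1 : Integrable R) (hR2 : MemLp R 2) :
    ∃ C, ∀ v : ℝ → E, Differentiable ℝ v → Integrable v → MemLp v 2 → (∀ t ≤ 1, v t = 0) →
      (∀ t, ‖deriv v t + (β : ℂ) • v t -
        ∑ i, Complex.exp (-(hd i : ℂ) * β) • L i (v (t - hd i))‖ ≤
          R t + η * ∑ i, ‖v (t - hd i)‖) → ∀ t, ‖v t‖ ≤ C := by
  set r := (eLpNorm R 2 volume).toReal with hr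
  have hr0 : 0 ≤ r := ENNReal.toReal_nonneg
  set Λ := ∑ i, ‖Complex.exp (-(hd i : ℂ) * β)‖ * ‖L i‖ with hΛ
  set N := 2 / κ * r with hN
  set N' := r + η * Fintype.card ι * N + |β| * N + Λ * N with hN'
  refine ⟨Real.sqrt (N ^ 2 + N' ^ 2), ?_⟩
  intro v hv hv1 hv2 hv0 hG t
  have hsh1 : ∀ i, Integrable (fun t => v (t - hd i)) := fun i => hv1.comp_sub_right (hd i)
  have hmp : ∀ i, MeasurePreserving (fun t : ℝ => t - hd i) volume volume :=
    fun i => measurePreserving_sub_right volume (hd i)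
  have hsh2 : ∀ i, MemLp (fun t => v (t - hd i)) 2 := fun i => hv2.comp_measurePreserving (hmp i)
  have hshN : ∀ i, eLpNorm (fun t => v (t - hd i)) 2 volume = eLpNorm v 2 volume := fun i =>
    eLpNorm_comp_measurePreserving hv2.1 (hmp i)
  -- functions
  set S : ℝ → ℝ := fun t => ∑ i, ‖v (t - hd i)‖ with hS
  have hS1 : Integrable S := integrable_finsetSum _ fun i _ => (hsh1 i).norm
  have hS2 : MemLp S 2 := memLp_finsetSum _ fun i _ => (hsh2 i).norm
  set Q : ℝ → ℝ := fun t => ∑ i, (‖Complex.exp (-(hd i : ℂ) * β)‖ * ‖L i‖) * ‖v (t - hd i)‖ with hQ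
  have hQ1 : Integrable Q := integrable_finsetSum _ fun i _ => (hsh1 i).norm.const_mul _
  have hQ2 : MemLp Q 2 := memLp_finsetSum _ fun i _ => (hsh2 i).norm.const_mul _
  set P : ℝ → ℝ := fun t => R t + η * S t with hP
  have hP1 : Integrable P := hR1.add (hS1.const_mul η)
  have hP2 : MemLp P 2 := hR2.add (hS2.const_mul η)
  have hder : ∀ t, ‖deriv v t‖ ≤ P t + |β| * ‖v t‖ + Q t := by
    intro t
    have e : deriv v t = (deriv v t + (β : ℂ) • v t -
        ∑ i, Complex.exp (-(hd i : ℂ) * β) • L i (v (t - hd i))) - (β : ℂ) • v t +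
        ∑ i, Complex.exp (-(hd i : ℂ) * β) • L i (v (t - hd i)) := by abel
    rw [e]
    refine (norm_add_le _ _).trans (add_le_add ((norm_sub_le _ _).trans (add_le_add (hG t) ?_)) ?_)
    · rw [norm_smul, Complex.norm_real, Real.norm_eq_abs]
    · refine norm_sum_le_of_le _ fun i _ => ?_
      rw [norm_smul, mul_assoc]
      gcongr
      exact (L i).le_opNorm _
  have hdm : AEStronglyMeasurable (deriv v) volume := by
    exact aestronglyMeasurable_deriv v volume
  have hD1 : Integrable (fun t => P t + |β| * ‖v t‖ + Q t) :=
    (hP1.add (hv1.norm.const_mul _)).add hQ1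
  have hD2 : MemLp (fun t => P t + |β| * ‖v t‖ + Q t) 2 :=
    (hP2.add (hv2.norm.const_mul _)).add hQ2
  have hv1' : Integrable (deriv v) := hD1.mono' hdm (Eventually.of_forall hder)
  have hv2' : MemLp (deriv v) 2 := hD2.mono' hdm (Eventually.of_forall hder)
  -- norms
  set nv := (eLpNorm v 2 volume).toReal with hnv
  have hnv0 : 0 ≤ nv := ENNReal.toReal_nonneg
  have tri : ∀ f g : ℝ → ℝ, MemLp f 2 → MemLp g 2 →
      (eLpNorm (fun t => f t + g t) 2 volume).toReal ≤
        (eLpNorm f 2 volume).toReal + (eLpNorm g 2 volume).toReal := by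
    intro f g hf hg
    rw [← ENNReal.toReal_add hf.2.ne hg.2.ne]
    exact ENNReal.toReal_mono (by simp [hf.2.ne, hg.2.ne]) (eLpNorm_add_le hf.1 hg.1 (by norm_num))
  have scal : ∀ (c : ℝ) (f : ℝ → ℝ), 0 ≤ c →
      (eLpNorm (fun t => c * f t) 2 volume).toReal = c * (eLpNorm f 2 volume).toReal := by
    intro c f hc
    rw [show (fun t => c * f t) = c • f from rfl, eLpNorm_const_smul, ENNReal.toReal_mul]
    simp [abs_of_nonneg hc]
  have wsum : ∀ c : ι → ℝ, (∀ i, 0 ≤ c i) →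
      (eLpNorm (fun t => ∑ i, c i * ‖v (t - hd i)‖) 2 volume).toReal ≤ (∑ i, c i) * nv := by
    intro c hc
    have hm : ∀ i, MemLp (fun t => c i * ‖v (t - hd i)‖) 2 := fun i => (hsh2 i).norm.const_mul _
    have h1 : eLpNorm (fun t => ∑ i, c i * ‖v (t - hd i)‖) 2 volume ≤
        ∑ i, eLpNorm (fun t => c i * ‖v (t - hd i)‖) 2 volume := by
      have := eLpNorm_sum_le (s := Finset.univ) (f := fun i t => c i * ‖v (t - hd i)‖)
        (fun i _ => (hm i).1) (p := 2) (μ := volume) (by norm_num)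
      convert this using 2
      ext t; simp
    refine (ENNReal.toReal_mono ?_ h1).trans (le_of_eq ?_)
    · exact ENNReal.sum_ne_top.2 fun i _ => (hm i).2.ne
    · rw [ENNReal.toReal_sum fun i _ => (hm i).2.ne, Finset.sum_mul]
      refine Finset.sum_congr rfl fun i _ => ?_
      rw [scal _ _ (hc i), eLpNorm_norm, hshN i]
  have hSn : (eLpNorm S 2 volume).toReal ≤ Fintype.card ι * nv := by
    have := wsum (fun _ => 1) (fun _ => zero_le_one)
    simpa [hS] using this
  have hQn : (eLpNorm Q 2 volume).toReal ≤ Λ * nv := wsum _ fun i => by positivity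
  have hPn : (eLpNorm P 2 volume).toReal ≤ r + η * (Fintype.card ι * nv) := by
    refine (tri _ _ hR2 (hS2.const_mul η)).trans ?_
    rw [scal _ _ hη0]
    gcongr
  have hap := apriori_aux L hd κ hκ β hM hv hv1 hv2 hv1' hv2'
  have hap2 : ENNReal.ofReal κ * eLpNorm v 2 volume ≤ eLpNorm P 2 volume := by
    refine hap.trans (eLpNorm_mono_real hG)
  have hap3 : κ * nv ≤ (eLpNorm P 2 volume).toReal := by
    have := ENNReal.toReal_mono hP2.2.ne hap2
    rwa [ENNReal.toReal_mul, ENNReal.toReal_ofReal hκ.le] at this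
  have hnvN : nv ≤ N := by
    have h1 : κ * nv ≤ r + κ / 2 * nv := by nlinarith
    rw [hN, div_mul_eq_mul_div, le_div_iff₀ hκ]
    linarith
  have hΛ0 : 0 ≤ Λ := by positivity
  have hdn : (eLpNorm (deriv v) 2 volume).toReal ≤ N' := by
    have h1 : (eLpNorm (deriv v) 2 volume).toReal ≤
        (eLpNorm (fun t => P t + |β| * ‖v t‖ + Q t) 2 volume).toReal :=
      ENNReal.toReal_mono hD2.2.ne (eLpNorm_mono_real hder)
    refine h1.trans ((tri (fun t => P t + |β| * ‖v t‖) Q (hP2.add (hv2.norm.const_mul _)) hQ2).trans ?_)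
    have h2 := tri P (fun t => |β| * ‖v t‖) hP2 (hv2.norm.const_mul _)
    rw [scal _ _ (abs_nonneg β), eLpNorm_norm] at h2
    have h3 : η * (Fintype.card ι * nv) ≤ η * Fintype.card ι * N := by
      rw [mul_assoc]; gcongr
    have h4 : |β| * nv ≤ |β| * N := by gcongr
    have h5 : Λ * nv ≤ Λ * N := by gcongr
    simp only [hN']
    linarith
  apply Real.le_sqrt_of_sq_le
  refine (sup_aux hv hv0 hv2 hv2' t).trans ?_
  gcongr

end gen


section step
open FourierTransform
variable {E : Type*} [NormedAddCommGroup E] [InnerProductSpace ℂ E] [CompleteSpace E]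
variable {ι : Type*} [Fintype ι]

lemma memLp_exp_aux {G : Type*} [NormedAddCommGroup G] {f : ℝ → G}
    (hm : AEStronglyMeasurable f volume) (μ D : ℝ) (hμ : 0 < μ)
    (h0 : ∀ t ≤ 0, f t = 0) (hb : ∀ t > 0, ‖f t‖ ≤ D * Real.exp (-μ * t)) :
    Integrable f ∧ MemLp f 2 := by
  have hon : ∀ g : ℝ → ℝ, (∀ t ≤ 0, g t = 0) → IntegrableOn g (Set.Ioi 0) → Integrable g := by
    intro g hg hi
    refine (integrableOn_iff_integrable_of_support_subset ?_).1 hi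
    intro t ht
    by_contra h
    exact ht (hg t (by simpa using h))
  have i1 : IntegrableOn (fun t => D * Real.exp (-μ * t)) (Set.Ioi 0) :=
    (exp_neg_integrableOn_Ioi 0 hμ).const_mul D
  have i2 : IntegrableOn (fun t => D ^ 2 * Real.exp (-(2 * μ) * t)) (Set.Ioi 0) :=
    (exp_neg_integrableOn_Ioi 0 (by positivity)).const_mul _
  constructor
  · rw [← integrable_norm_iff hm]
    refine hon _ (fun t ht => by simp [h0 t ht]) ?_
    refine i1.mono' hm.norm.restrict ?_
    filter_upwards [ae_restrict_mem measurableSet_Ioi] with t ht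
    simpa using hb t ht
  · rw [memLp_two_iff_integrable_sq_norm hm]
    refine hon _ (fun t ht => by simp [h0 t ht]) ?_
    refine i2.mono' (hm.norm.pow 2).restrict ?_
    filter_upwards [ae_restrict_mem measurableSet_Ioi] with t ht
    have h1 := hb t ht
    have h2 : D ^ 2 * Real.exp (-(2 * μ) * t) = (D * Real.exp (-μ * t)) ^ 2 := by
      rw [mul_pow, ← Real.exp_nat_mul]; congr 2; push_cast; ring
    rw [h2, Real.norm_of_nonneg (by positivity)]
    gcongr

lemma step_aux (L : ι → E →L[ℂ] E) (hd : ι → ℝ) (hdnn : ∀ i, 0 ≤ hd i) (i0 : ι) (hi0 : hd i0 = 0)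
    (H : ℝ) (hH : ∀ i, hd i ≤ H) (κ : ℝ) (hκ : 0 < κ)
    (hM : ∀ s : ℂ, 0 ≤ s.re → ∀ w : E,
      κ * ‖w‖ ≤ ‖s • w - ∑ i, Complex.exp (-(hd i : ℂ) * s) • L i w‖)
    (a δ : ℝ) (hδ : 0 < δ) (hδa : δ < a)
    (hη : (δ + (∑ i, ‖L i‖) * (Real.exp (δ * H) - 1)) * Fintype.card ι ≤ κ / 2)
    (b : ℝ) (hb : 0 ≤ b) (F x : ℝ → E)
    (hx : ∀ t > 0, HasDerivAt x ((∑ i, L i (x (t - hd i))) + F t) t)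
    (C1 C2 : ℝ) (hC1 : 0 ≤ C1) (hC2 : 0 ≤ C2)
    (hxb : ∀ t, -H ≤ t → ‖x t‖ ≤ C1 * Real.exp (b * t))
    (hFb : ∀ t, 0 ≤ t → ‖F t‖ ≤ C2 * Real.exp ((b - a) * t)) :
    ∃ C, ∀ t, 2 ≤ t → ‖x t‖ ≤ C * Real.exp ((b - δ / 2) * t) := by
  have hH0 : 0 ≤ H := hi0 ▸ hH i0
  set β := b + δ / 2 with hβ
  have hβ0 : 0 ≤ β := by positivity
  set φ : ℝ → ℝ := fun t => Real.smoothTransition (t - 1) with hφ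
  have hφs : ContDiff ℝ 1 φ := by
    have : ContDiff ℝ 1 Real.smoothTransition := Real.smoothTransition.contDiff
    exact this.comp (contDiff_id.sub contDiff_const)
  have hφc : Continuous φ := hφs.continuous
  set ψ : ℝ → ℝ := deriv φ with hψ
  have hψc : Continuous ψ := hφs.continuous_deriv le_rfl
  have hφd : ∀ t, HasDerivAt φ (ψ t) t := fun t =>
    (hφs.differentiable (by norm_num) t).hasDerivAt
  have hφ0 : ∀ t ≤ 1, φ t = 0 := fun t ht =>
    Real.smoothTransition.zero_of_nonpos (by linarith)
  have hφ1 : ∀ t, 2 ≤ t → φ t = 1 := fun t ht =>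
    Real.smoothTransition.one_of_one_le (by linarith)
  have hφnn : ∀ t, 0 ≤ φ t := fun t => Real.smoothTransition.nonneg _
  have hφle : ∀ t, φ t ≤ 1 := fun t => Real.smoothTransition.le_one _
  have hψ0 : ∀ t < 1, ψ t = 0 := by
    intro t ht
    have : φ =ᶠ[nhds t] fun _ => 0 := by
      filter_upwards [Iio_mem_nhds ht] with s hs
      exact hφ0 s (le_of_lt hs)
    simp [hψ, this.deriv_eq]
  have hψ1 : ∀ t > 2, ψ t = 0 := by
    intro t ht
    have : φ =ᶠ[nhds t] fun _ => 1 := by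
      filter_upwards [Ioi_mem_nhds ht] with s hs
      exact hφ1 s (le_of_lt hs)
    simp [hψ, this.deriv_eq]
  -- remainder
  set R : ℝ → ℝ := fun t => C1 * Real.exp (δ / 2 * t) * (|ψ t| + ∑ i, ‖L i‖ * |φ t - φ (t - hd i)|)
    + C2 * φ t * Real.exp (-(a - δ / 2) * t) with hR
  have hRc : Continuous R := by fun_prop
  have hRnn : ∀ t, 0 ≤ R t := by
    intro t
    have := hφnn t
    simp only [hR]
    positivity
  have hR0 : ∀ t < 1, R t = 0 := by
    intro t ht
    have h1 : ∀ i, φ (t - hd i) = 0 := fun i => hφ0 _ (by linarith [hdnn i])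
    simp [hR, hψ0 t ht, hφ0 t ht.le, h1]
  have hR1 : ∀ t > 2 + H, R t = C2 * Real.exp (-(a - δ / 2) * t) := by
    intro t ht
    have h1 : ∀ i, φ (t - hd i) = 1 := fun i => hφ1 _ (by linarith [hH i])
    have h2 : φ t = 1 := hφ1 _ (by linarith)
    simp [hR, hψ1 t (by linarith), h1, h2]
  obtain ⟨hRi, hR2⟩ : Integrable R ∧ MemLp R 2 := by
    obtain ⟨D0, hD0⟩ := (isCompact_Icc (a := (0:ℝ)) (b := 2 + H)).exists_bound_of_continuousOn
      (f := fun t => R t * Real.exp ((a - δ / 2) * t)) (by fun_prop)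
    refine memLp_exp_aux hRc.aestronglyMeasurable (a - δ / 2) (max D0 C2) (by linarith)
      (fun t ht => hR0 t (by linarith)) ?_
    intro t ht
    rw [Real.norm_of_nonneg (hRnn t)]
    rcases le_or_gt t (2 + H) with h | h
    · have h1 := (le_abs_self _).trans (hD0 t ⟨ht.le, h⟩)
      have h2 : R t = R t * Real.exp ((a - δ / 2) * t) * Real.exp (-(a - δ / 2) * t) := by
        rw [mul_assoc, ← Real.exp_add,
          show (a - δ / 2) * t + -(a - δ / 2) * t = 0 by ring, Real.exp_zero, mul_one]
      rw [h2]
      gcongr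
      exact h1.trans (le_max_left _ _)
    · rw [hR1 t h]
      gcongr
      exact le_max_right _ _
  set η := δ + (∑ i, ‖L i‖) * (Real.exp (δ * H) - 1) with hηd
  have hexp1 : 0 ≤ Real.exp (δ * H) - 1 := by
    have := Real.one_le_exp (x := δ * H) (by positivity)
    linarith
  obtain ⟨C, hC⟩ := comb_aux L hd κ hκ β (fun s hs => hM s (by rw [hs]; exact hβ0)) η
    (by positivity) hη R hRi hR2
  have main : ∀ ε > 0, ∀ t, ‖(φ t * (Real.exp (-δ * t) + ε)⁻¹ * Real.exp (-β * t)) • x t‖ ≤ C := by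
    intro ε hε
    set θ : ℝ → ℝ := fun t => (Real.exp (-δ * t) + ε)⁻¹ with hθ
    have hθpos : ∀ t, 0 < θ t := fun t => by simp only [hθ]; positivity
    have hθ1 : ∀ t, θ t ≤ Real.exp (δ * t) := by
      intro t
      simp only [hθ]
      rw [show Real.exp (δ * t) = (Real.exp (-δ * t))⁻¹ by rw [← Real.exp_neg]; congr 1; ring]
      gcongr
      linarith
    have hθ2 : ∀ t, θ t ≤ ε⁻¹ := by
      intro t
      simp only [hθ]
      gcongr
      linarith [Real.exp_pos (-δ * t)]
    have hθd : ∀ t, HasDerivAt θ (δ * Real.exp (-δ * t) * θ t ^ 2) t := by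
      intro t
      have h1 : HasDerivAt (fun t : ℝ => Real.exp (-δ * t) + ε) (Real.exp (-δ * t) * (-δ * 1)) t :=
        (((hasDerivAt_id t).const_mul (-δ)).exp).add_const ε
      have h2 := h1.inv (by positivity)
      refine HasDerivAt.congr_deriv h2 ?_
      simp only [hθ]
      field_simp
    have hθd' : ∀ t, δ * Real.exp (-δ * t) * θ t ^ 2 ≤ δ * θ t := by
      intro t
      have h1 : Real.exp (-δ * t) * θ t ≤ 1 := by
        simp only [hθ]
        rw [← div_eq_mul_inv, div_le_one (by positivity)]
        linarith
      have := hθpos t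
      calc _ = δ * θ t * (Real.exp (-δ * t) * θ t) := by ring
        _ ≤ δ * θ t * 1 := by gcongr
        _ = _ := mul_one _
    have hθm : ∀ t h, 0 ≤ h → h ≤ H → θ (t - h) ≤ θ t ∧
        θ t - θ (t - h) ≤ (Real.exp (δ * H) - 1) * θ (t - h) := by
      intro t h h0 hhH
      have e1 : Real.exp (-δ * (t - h)) = Real.exp (δ * h) * Real.exp (-δ * t) := by
        rw [← Real.exp_add]; congr 1; ring
      have e2 : 1 ≤ Real.exp (δ * h) := Real.one_le_exp (by positivity)
      have e3 : Real.exp (δ * h) ≤ Real.exp (δ * H) := by gcongr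
      have e4 := Real.exp_pos (-δ * t)
      constructor
      · simp only [hθ]
        rw [e1]
        gcongr
        nlinarith
      · have : θ t ≤ Real.exp (δ * H) * θ (t - h) := by
          simp only [hθ]
          rw [e1, ← div_eq_mul_inv, le_div_iff₀ (by positivity), inv_mul_le_iff₀ (by positivity)]
          nlinarith [mul_le_mul_of_nonneg_right e3 e4.le, mul_le_mul_of_nonneg_right (e2.trans e3) hε.le]
        linarith
    set q : ℝ → ℝ := fun t => φ t * θ t * Real.exp (-β * t) with hq
    set v : ℝ → E := fun t => q t • x t with hv
    have hqnn : ∀ t, 0 ≤ q t := fun t => by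
      have := hφnn t; have := hθpos t
      simp only [hq]; positivity
    have hv0 : ∀ t ≤ 1, v t = 0 := fun t ht => by simp [hv, hq, hφ0 t ht]
    have hqd : ∀ t, HasDerivAt q ((ψ t * θ t + φ t * (δ * Real.exp (-δ * t) * θ t ^ 2)) *
        Real.exp (-β * t) + φ t * θ t * (Real.exp (-β * t) * (-β * 1))) t := fun t =>
      ((hφd t).mul (hθd t)).mul (((hasDerivAt_id t).const_mul (-β)).exp)
    have hvd : ∀ t > 0, HasDerivAt v (q t • ((∑ i, L i (x (t - hd i))) + F t) +
        ((ψ t * θ t + φ t * (δ * Real.exp (-δ * t) * θ t ^ 2)) *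
        Real.exp (-β * t) + φ t * θ t * (Real.exp (-β * t) * (-β * 1))) • x t) t :=
      fun t ht => (hqd t).smul (hx t ht)
    have hvd0 : ∀ t < 1, HasDerivAt v 0 t := by
      intro t ht
      refine (hasDerivAt_const t (0 : E)).congr_of_eventuallyEq ?_
      filter_upwards [Iio_mem_nhds ht] with s hs
      exact hv0 s (le_of_lt hs)
    have hvdiff : Differentiable ℝ v := by
      intro t
      rcases lt_or_ge t 1 with h | h
      · exact (hvd0 t h).differentiableAt
      · exact (hvd t (by linarith)).differentiableAt
    obtain ⟨hv1, hv2⟩ : Integrable v ∧ MemLp v 2 := by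
      refine memLp_exp_aux hvdiff.continuous.aestronglyMeasurable (δ / 2) (ε⁻¹ * C1) (by linarith)
        (fun t ht => hv0 t (by linarith)) ?_
      intro t ht
      have e : Real.exp (-(δ / 2) * t) = Real.exp (-β * t) * Real.exp (b * t) := by
        rw [← Real.exp_add]; congr 1; rw [hβ]; ring
      rw [e]
      simp only [hv]
      rw [norm_smul, Real.norm_of_nonneg (hqnn t)]
      have h1 := hxb t (by linarith)
      have h2 := hθ2 t
      have h3 := hφle t
      have h4 := hφnn t
      have h5 := (hθpos t).le
      calc q t * ‖x t‖ ≤ (1 * ε⁻¹ * Real.exp (-β * t)) * (C1 * Real.exp (b * t)) := by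
            simp only [hq]
            gcongr
        _ = _ := by ring
    refine hC v hvdiff hv1 hv2 hv0 ?_
    intro t
    rcases lt_or_ge t 1 with h | h
    · have h1 : ∀ i, v (t - hd i) = 0 := fun i => hv0 _ (by linarith [hdnn i])
      simp [(hvd0 t h).deriv, hv0 t h.le, h1, hRnn t]
    have ht0 : 0 < t := by linarith
    rw [(hvd t ht0).deriv]
    have hconv : ∀ i, Complex.exp (-(hd i : ℂ) * β) • L i (v (t - hd i)) =
        (φ (t - hd i) * θ (t - hd i) * Real.exp (-β * t)) • L i (x (t - hd i)) := by
      intro i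
      have e1 : Complex.exp (-(hd i : ℂ) * β) = ((Real.exp (-hd i * β) : ℝ) : ℂ) := by
        push_cast; rfl
      have e2 : Real.exp (-β * t) = Real.exp (-hd i * β) * Real.exp (-β * (t - hd i)) := by
        rw [← Real.exp_add]; congr 1; ring
      rw [e1, Complex.coe_smul]
      simp only [hv, hq]
      rw [(L i).map_smul_of_tower, smul_smul, e2]
      congr 1; ring
    have hconvb : (β : ℂ) • v t = (β * q t) • x t := by
      rw [Complex.coe_smul]; simp only [hv]; rw [smul_smul]
    rw [hconvb, Finset.sum_congr rfl fun i _ => hconv i]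
    have hsplit : q t • ((∑ i, L i (x (t - hd i))) + F t) +
        ((ψ t * θ t + φ t * (δ * Real.exp (-δ * t) * θ t ^ 2)) *
        Real.exp (-β * t) + φ t * θ t * (Real.exp (-β * t) * (-β * 1))) • x t + (β * q t) • x t -
        ∑ i, (φ (t - hd i) * θ (t - hd i) * Real.exp (-β * t)) • L i (x (t - hd i)) =
        (ψ t * θ t * Real.exp (-β * t)) • x t +
        (φ t * (δ * Real.exp (-δ * t) * θ t ^ 2) * Real.exp (-β * t)) • x t +
        (∑ i, ((Real.exp (-β * t) * θ t * (φ t - φ (t - hd i))) • L i (x (t - hd i)) +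
          (Real.exp (-β * t) * (θ t - θ (t - hd i)) * φ (t - hd i)) • L i (x (t - hd i)))) +
        q t • F t := by
      have e : ∀ i, (Real.exp (-β * t) * θ t * (φ t - φ (t - hd i))) • L i (x (t - hd i)) +
          (Real.exp (-β * t) * (θ t - θ (t - hd i)) * φ (t - hd i)) • L i (x (t - hd i)) =
          q t • L i (x (t - hd i)) -
          (φ (t - hd i) * θ (t - hd i) * Real.exp (-β * t)) • L i (x (t - hd i)) := by
        intro i
        rw [← add_smul, ← sub_smul]
        congr 1
        simp only [hq]; ring
      rw [Finset.sum_congr rfl fun i _ => e i, Finset.sum_sub_distrib, ← Finset.smul_sum]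
      simp only [hq]
      module
    rw [hsplit]
    have eb : Real.exp (δ * t) * Real.exp (-β * t) * Real.exp (b * t) = Real.exp (δ / 2 * t) := by
      rw [← Real.exp_add, ← Real.exp_add]; congr 1; rw [hβ]; ring
    have hxt := hxb t (by linarith)
    have t1 : ‖(ψ t * θ t * Real.exp (-β * t)) • x t‖ ≤ C1 * Real.exp (δ / 2 * t) * |ψ t| := by
      rw [norm_smul, norm_mul, norm_mul, Real.norm_of_nonneg (hθpos t).le,
        Real.norm_of_nonneg (Real.exp_pos _).le, Real.norm_eq_abs]
      calc _ ≤ |ψ t| * Real.exp (δ * t) * Real.exp (-β * t) * (C1 * Real.exp (b * t)) := by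
            gcongr
            exact hθ1 t
        _ = C1 * (Real.exp (δ * t) * Real.exp (-β * t) * Real.exp (b * t)) * |ψ t| := by ring
        _ = _ := by rw [eb]
    have t2 : ‖(φ t * (δ * Real.exp (-δ * t) * θ t ^ 2) * Real.exp (-β * t)) • x t‖ ≤
        δ * ‖v t‖ := by
      have := hφnn t
      have h2 := hθpos t
      simp only [hv]
      rw [norm_smul, norm_smul, Real.norm_of_nonneg (by positivity), Real.norm_of_nonneg (hqnn t)]
      calc _ ≤ φ t * (δ * θ t) * Real.exp (-β * t) * ‖x t‖ := by
            have h4 := hθd' t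
            generalize δ * Real.exp (-δ * t) * θ t ^ 2 = X at h4 ⊢
            gcongr
        _ = _ := by simp only [hq]; ring
    have t3 : ∀ i, ‖(Real.exp (-β * t) * θ t * (φ t - φ (t - hd i))) • L i (x (t - hd i))‖ ≤
        C1 * Real.exp (δ / 2 * t) * (‖L i‖ * |φ t - φ (t - hd i)|) := by
      intro i
      rw [norm_smul, norm_mul, norm_mul, Real.norm_of_nonneg (hθpos t).le,
        Real.norm_of_nonneg (Real.exp_pos _).le, Real.norm_eq_abs]
      have h1 := hxb (t - hd i) (by linarith [hH i])
      have h2 : Real.exp (b * (t - hd i)) ≤ Real.exp (b * t) := by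
        gcongr; linarith [hdnn i]
      calc _ ≤ Real.exp (-β * t) * Real.exp (δ * t) * |φ t - φ (t - hd i)| *
            (‖L i‖ * (C1 * Real.exp (b * t))) := by
            gcongr
            · exact hθ1 t
            · refine ((L i).le_opNorm _).trans ?_
              gcongr
              exact h1.trans (by gcongr)
        _ = C1 * (Real.exp (δ * t) * Real.exp (-β * t) * Real.exp (b * t)) *
            (‖L i‖ * |φ t - φ (t - hd i)|) := by ring
        _ = _ := by rw [eb]
    have t4 : ∀ i, ‖(Real.exp (-β * t) * (θ t - θ (t - hd i)) * φ (t - hd i)) •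
        L i (x (t - hd i))‖ ≤ (∑ i, ‖L i‖) * (Real.exp (δ * H) - 1) * ‖v (t - hd i)‖ := by
      intro i
      obtain ⟨h1, h2⟩ := hθm t (hd i) (hdnn i) (hH i)
      have h3 := hφnn (t - hd i)
      have h4 := hθpos (t - hd i)
      have h5 : Real.exp (-β * t) ≤ Real.exp (-β * (t - hd i)) := by
        have := mul_nonneg hβ0 (hdnn i)
        gcongr 1
        linarith
      have h6 : ‖L i‖ ≤ ∑ i, ‖L i‖ :=
        Finset.single_le_sum (f := fun i => ‖L i‖) (fun i _ => norm_nonneg _) (Finset.mem_univ i)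
      have h7 : 0 ≤ θ t - θ (t - hd i) := by linarith
      simp only [hv]
      rw [norm_smul, norm_smul, Real.norm_of_nonneg (by positivity),
        Real.norm_of_nonneg (hqnn _)]
      calc _ ≤ Real.exp (-β * (t - hd i)) * ((Real.exp (δ * H) - 1) * θ (t - hd i)) *
            φ (t - hd i) * ((∑ i, ‖L i‖) * ‖x (t - hd i)‖) := by
            gcongr
            exact ((L i).le_opNorm _).trans (by gcongr)
        _ = _ := by simp only [hq]; ring
    have t5 : ‖q t • F t‖ ≤ C2 * φ t * Real.exp (-(a - δ / 2) * t) := by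
      rw [norm_smul, Real.norm_of_nonneg (hqnn t)]
      have h1 := hFb t ht0.le
      have h3 := hφnn t
      calc _ ≤ φ t * Real.exp (δ * t) * Real.exp (-β * t) * (C2 * Real.exp ((b - a) * t)) := by
            simp only [hq]
            gcongr
            exact hθ1 t
        _ = C2 * φ t * (Real.exp (δ * t) * Real.exp (-β * t) * Real.exp ((b - a) * t)) := by ring
        _ = _ := by
            rw [← Real.exp_add, ← Real.exp_add]; congr 2; rw [hβ]; ring
    have t6 : δ * ‖v t‖ ≤ δ * ∑ i, ‖v (t - hd i)‖ := by
      gcongr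
      have := Finset.single_le_sum (f := fun i => ‖v (t - hd i)‖) (fun i _ => norm_nonneg _)
        (Finset.mem_univ i0)
      simpa [hi0] using this
    have t7 : ‖∑ i, ((Real.exp (-β * t) * θ t * (φ t - φ (t - hd i))) • L i (x (t - hd i)) +
          (Real.exp (-β * t) * (θ t - θ (t - hd i)) * φ (t - hd i)) • L i (x (t - hd i)))‖ ≤
        C1 * Real.exp (δ / 2 * t) * (∑ i, ‖L i‖ * |φ t - φ (t - hd i)|) +
        (∑ i, ‖L i‖) * (Real.exp (δ * H) - 1) * ∑ i, ‖v (t - hd i)‖ := by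
      rw [Finset.mul_sum, Finset.mul_sum, ← Finset.sum_add_distrib]
      exact norm_sum_le_of_le _ fun i _ => (norm_add_le _ _).trans (add_le_add (t3 i) (t4 i))
    refine (norm_add_le _ _).trans ((add_le_add ((norm_add_le _ _).trans
      (add_le_add ((norm_add_le _ _).trans (add_le_add t1 (t2.trans t6))) t7)) t5).trans
      (le_of_eq ?_))
    simp only [hR, hηd]
    ring
  refine ⟨C, fun t ht => ?_⟩
  have hC0 : 0 ≤ C := (norm_nonneg _).trans (main 1 one_pos 0)
  have h1 : ∀ ε > 0, Real.exp (-β * t) * ‖x t‖ ≤ C * Real.exp (-δ * t) + C * ε := by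
    intro ε hε
    have := main ε hε t
    rw [hφ1 t ht, norm_smul, Real.norm_of_nonneg (by positivity), one_mul, mul_assoc,
      inv_mul_le_iff₀ (by positivity)] at this
    linarith
  have h2 : Real.exp (-β * t) * ‖x t‖ ≤ C * Real.exp (-δ * t) := by
    refine le_of_forall_pos_le_add fun ε hε => ?_
    refine (h1 (ε / (C + 1)) (by positivity)).trans ?_
    gcongr
    rw [mul_div_assoc', div_le_iff₀ (by positivity)]
    nlinarith
  calc ‖x t‖ = Real.exp (β * t) * (Real.exp (-β * t) * ‖x t‖) := by
        rw [← mul_assoc, ← Real.exp_add]; simp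
    _ ≤ Real.exp (β * t) * (C * Real.exp (-δ * t)) := by gcongr
    _ = C * (Real.exp (β * t) * Real.exp (-δ * t)) := by ring
    _ = _ := by rw [← Real.exp_add]; congr 2; rw [hβ]; ring

end step


section growth
variable {E : Type*} [NormedAddCommGroup E] [InnerProductSpace ℂ E] [CompleteSpace E]
variable {ι : Type*} [Fintype ι]

lemma ext_aux (x : ℝ → E) (H : ℝ) (hxc : ContinuousOn x (Set.Ici (-H))) (b t1 C : ℝ)
    (h : ∀ t, t1 ≤ t → ‖x t‖ ≤ C * Real.exp (b * t)) :
    ∃ C' ≥ 0, ∀ t, -H ≤ t → ‖x t‖ ≤ C' * Real.exp (b * t) := by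
  obtain ⟨D0, hD0⟩ := (isCompact_Icc (a := -H) (b := t1)).exists_bound_of_continuousOn
    (f := fun t => ‖x t‖ * Real.exp (-b * t))
    ((hxc.mono Set.Icc_subset_Ici_self).norm.mul (by fun_prop))
  refine ⟨max (max C D0) 0, le_max_right _ _, fun t ht => ?_⟩
  rcases le_total t1 t with h1 | h1
  · refine (h t h1).trans ?_
    gcongr
    exact (le_max_left _ _).trans (le_max_left _ _)
  · have h2 := (le_abs_self _).trans (hD0 t ⟨ht, h1⟩)
    have h3 : ‖x t‖ = ‖x t‖ * Real.exp (-b * t) * Real.exp (b * t) := by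
      rw [mul_assoc, ← Real.exp_add, show -b * t + b * t = 0 by ring, Real.exp_zero, mul_one]
    rw [h3]
    gcongr
    exact h2.trans ((le_max_right _ _).trans (le_max_left _ _))

lemma growth_aux (L : ι → E →L[ℂ] E) (hd : ι → ℝ) (hdnn : ∀ i, 0 ≤ hd i)
    (H : ℝ) (hH0 : 0 ≤ H) (hH : ∀ i, hd i ≤ H) (F x : ℝ → E)
    (hxc : ContinuousOn x (Set.Ici (-H)))
    (hx : ∀ t > 0, HasDerivAt x ((∑ i, L i (x (t - hd i))) + F t) t)
    (D : ℝ) (hD : 0 ≤ D)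
    (hF : ∀ t, 0 ≤ t → ∀ K, (∀ τ ∈ Set.Icc (t - H) t, ‖x τ‖ ≤ K) → ‖F t‖ ≤ D * K) :
    ∃ B C : ℝ, ∀ t, 1 ≤ t → ‖x t‖ ≤ C * Real.exp (B * t) := by
  set α := (∑ i, ‖L i‖) + D with hα
  have hα0 : 0 ≤ α := by positivity
  set B := 2 * α + 1 with hB
  have hB0 : 0 < B := by positivity
  obtain ⟨C0, hC0⟩ := (isCompact_Icc (a := -H) (b := 1)).exists_bound_of_continuousOn
    (hxc.mono Set.Icc_subset_Ici_self)
  have hC0nn : 0 ≤ C0 := (norm_nonneg _).trans (hC0 1 ⟨by linarith, le_rfl⟩)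
  refine ⟨B, 3 * C0, fun T hT => ?_⟩
  obtain ⟨t0, ht0, hmax⟩ := (isCompact_Icc (a := (1:ℝ)) (b := T)).exists_isMaxOn
    ⟨1, le_rfl, hT⟩ (f := fun t => ‖x t‖ * Real.exp (-B * t))
    ((hxc.mono fun t ht => by simp only [Set.mem_Ici]; linarith [ht.1]).norm.mul (by fun_prop))
  set N := ‖x t0‖ * Real.exp (-B * t0) with hN
  have hN0 : 0 ≤ N := by positivity
  have hcancel : ∀ t, Real.exp (-B * t) * Real.exp (B * t) = 1 := fun t => by
    rw [← Real.exp_add, show -B * t + B * t = 0 by ring, Real.exp_zero]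
  have hNb : ∀ t ∈ Set.Icc 1 T, ‖x t‖ ≤ N * Real.exp (B * t) := by
    intro t ht
    have h1 : ‖x t‖ * Real.exp (-B * t) ≤ N := hmax ht
    calc ‖x t‖ = ‖x t‖ * Real.exp (-B * t) * Real.exp (B * t) := by
          rw [mul_assoc, hcancel, mul_one]
      _ ≤ _ := by gcongr
  have hhist : ∀ s ∈ Set.Icc 1 T, ∀ τ ∈ Set.Icc (s - H) s, ‖x τ‖ ≤ (N + C0) * Real.exp (B * s) := by
    intro s hs τ hτ
    have e1 : 1 ≤ Real.exp (B * s) := Real.one_le_exp (mul_nonneg hB0.le (by linarith [hs.1]))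
    rcases le_total τ 1 with h | h
    · refine (hC0 τ ⟨by linarith [hs.1, hτ.1], h⟩).trans ?_
      nlinarith
    · have h1 := hNb τ ⟨h, hτ.2.trans hs.2⟩
      have h2 : Real.exp (B * τ) ≤ Real.exp (B * s) := by
        have := hτ.2
        gcongr
      calc ‖x τ‖ ≤ N * Real.exp (B * s) := h1.trans (by gcongr)
        _ ≤ _ := by gcongr; linarith
  have hder : ∀ s ∈ Set.Icc 1 T, ‖(∑ i, L i (x (s - hd i))) + F s‖ ≤
      α * ((N + C0) * Real.exp (B * s)) := by
    intro s hs
    refine (norm_add_le _ _).trans ?_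
    rw [hα, add_mul, Finset.sum_mul]
    refine add_le_add (norm_sum_le_of_le _ fun i _ => ?_) (hF s (by linarith [hs.1]) _ (hhist s hs))
    refine ((L i).le_opNorm _).trans ?_
    gcongr
    exact hhist s hs _ ⟨by linarith [hH i], by linarith [hdnn i]⟩
  have hbd := image_norm_le_of_norm_deriv_right_le_deriv_boundary' (f := x) (a := 1) (b := T)
    (f' := fun s => (∑ i, L i (x (s - hd i))) + F s)
    (B := fun s => C0 + α / B * (N + C0) * Real.exp (B * s))
    (B' := fun s => α * ((N + C0) * Real.exp (B * s)))
    (hxc.mono fun t ht => by simp only [Set.mem_Ici]; linarith [ht.1])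
    (fun s hs => (hx s (by linarith [hs.1])).hasDerivWithinAt)
    (by
      refine (hC0 1 ⟨by linarith, le_rfl⟩).trans ?_
      have : 0 ≤ α / B * (N + C0) * Real.exp (B * 1) := by positivity
      linarith)
    (by fun_prop)
    (fun s hs => by
      have h1 : HasDerivAt (fun s : ℝ => Real.exp (B * s)) (Real.exp (B * s) * (B * 1)) s :=
        ((hasDerivAt_id s).const_mul B).exp
      have h2 := (h1.const_mul (α / B * (N + C0))).const_add C0
      refine (h2.congr_deriv ?_).hasDerivWithinAt
      field_simp)
    (fun s hs => hder s ⟨hs.1, hs.2.le⟩)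
  have h0 := hbd ht0
  have hαB : α / B ≤ 1 / 2 := by
    rw [div_le_iff₀ hB0]; linarith
  have e1 : 1 ≤ Real.exp (B * t0) := Real.one_le_exp (mul_nonneg hB0.le (by linarith [ht0.1]))
  have hxN : ‖x t0‖ = N * Real.exp (B * t0) := by rw [hN, mul_assoc, hcancel, mul_one]
  have hN3 : N ≤ 3 * C0 := by
    have h1 : α / B * (N + C0) * Real.exp (B * t0) ≤ 1 / 2 * (N + C0) * Real.exp (B * t0) := by
      gcongr
    have h2 : N * Real.exp (B * t0) ≤ (C0 + 1 / 2 * (N + C0)) * Real.exp (B * t0) := by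
      rw [← hxN]
      nlinarith
    have := le_of_mul_le_mul_right h2 (by positivity)
    linarith
  exact (hNb T ⟨hT, le_rfl⟩).trans (by gcongr)

end growth


theorem stmt6 {n m : ℕ} (hn : 1 ≤ n) (hm : 1 ≤ m)
    (A : Fin (m + 1) → Matrix (Fin n) (Fin n) ℂ)
    (hd : Fin (m + 1) → ℝ) (hd0 : hd 0 = 0) (hdnn : ∀ i, 0 ≤ hd i)
    (H : ℝ) (hH : IsGreatest (Set.range hd) H)
    (ρ : ℝ) (hρ : 0 < ρ)
    (hneg : ∀ z : ℂ, charFn A hd z = 0 → z.re ≤ -ρ)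
    (F : ℝ → EuclideanSpace ℂ (Fin n)) (hFc : ContinuousOn F (Set.Ici 0))
    (x : ℝ → EuclideanSpace ℂ (Fin n)) (hxc : ContinuousOn x (Set.Ici (-H)))
    (hx : ∀ t > 0, HasDerivAt x ((∑ i, mulVecE (A i) (x (t - hd i))) + F t) t)
    (γ : ℝ → ℝ) (hγc : ContinuousOn γ (Set.Ici 0)) (hγnn : ∀ t, 0 ≤ t → 0 ≤ γ t)
    (hFb : ∀ t, 0 ≤ t → ‖F t‖ ≤ γ t * slidingSup H x t)
    (a : ℝ) (ha : 0 < a)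
    (hγdec : Tendsto (fun t => Real.exp (a * t) * γ t) atTop (nhds 0)) :
    ∃ M > 0, ∃ c > 0, ∀ t, 0 ≤ t → ‖x t‖ ≤ M * Real.exp (-c * t) := by
  have hHle : ∀ i, hd i ≤ H := fun i => hH.2 ⟨i, rfl⟩
  have hH0 : 0 ≤ H := hd0 ▸ hHle 0
  set L : Fin (m + 1) → EuclideanSpace ℂ (Fin n) →L[ℂ] EuclideanSpace ℂ (Fin n) :=
    fun i => (Matrix.toEuclideanLin (A i)).toContinuousLinearMap with hL
  have hLx : ∀ i w, mulVecE (A i) w = L i w := fun i w => rfl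
  simp only [hLx] at hx
  -- decay of gamma
  obtain ⟨D, hD0, hD⟩ : ∃ D ≥ 0, ∀ t, 0 ≤ t → γ t ≤ D * Real.exp (-a * t) := by
    obtain ⟨T, hT⟩ := (hγdec.eventually (gt_mem_nhds (zero_lt_one))).exists_forall_of_atTop
    obtain ⟨D0, hD0⟩ := (isCompact_Icc (a := (0:ℝ)) (b := T)).exists_bound_of_continuousOn
      (f := fun t => Real.exp (a * t) * γ t)
      (ContinuousOn.mul (by fun_prop) (hγc.mono Set.Icc_subset_Ici_self))
    refine ⟨max D0 1, zero_le_one.trans (le_max_right _ _), fun t ht => ?_⟩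
    have h1 : Real.exp (a * t) * γ t ≤ max D0 1 := by
      rcases le_total t T with h | h
      · exact ((le_abs_self _).trans (hD0 t ⟨ht, h⟩)).trans (le_max_left _ _)
      · exact (hT t h).le.trans (le_max_right _ _)
    calc γ t = (Real.exp (a * t) * γ t) * Real.exp (-a * t) := by
          rw [mul_comm (Real.exp _), mul_assoc, ← Real.exp_add,
            show a * t + -a * t = 0 by ring, Real.exp_zero, mul_one]
      _ ≤ _ := by gcongr
  have hFK : ∀ t, 0 ≤ t → ∀ K, (∀ τ ∈ Set.Icc (t - H) t, ‖x τ‖ ≤ K) →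
      ‖F t‖ ≤ D * Real.exp (-a * t) * K := by
    intro t ht K hK
    have hK0 : 0 ≤ K := (norm_nonneg _).trans (hK t ⟨by linarith, le_rfl⟩)
    have h1 : slidingSup H x t ≤ K := by
      refine csSup_le ⟨_, t, ⟨by linarith, le_rfl⟩, rfl⟩ ?_
      rintro _ ⟨τ, hτ, rfl⟩
      exact hK τ hτ
    calc ‖F t‖ ≤ γ t * slidingSup H x t := hFb t ht
      _ ≤ γ t * K := by have := hγnn t ht; gcongr
      _ ≤ _ := by gcongr; exact hD t ht
  -- invertibility
  have hinj : ∀ s : ℂ, 0 ≤ s.re → ∀ w : EuclideanSpace ℂ (Fin n),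
      s • w - ∑ i, Complex.exp (-(hd i : ℂ) * s) • L i w = 0 → w = 0 := by
    intro s hs w hw
    by_contra hne
    have hdet : charFn A hd s = 0 := by
      unfold charFn
      rw [← Matrix.exists_mulVec_eq_zero_iff]
      refine ⟨WithLp.ofLp w, ?_, ?_⟩
      · intro h0; exact hne (by ext i; simpa using congrFun h0 i)
      · have h1 := congrArg WithLp.ofLp hw
        rw [Matrix.sub_mulVec, Matrix.smul_mulVec, Matrix.one_mulVec, Matrix.sum_mulVec]
        simp only [Matrix.smul_mulVec]
        simpa [hL] using h1
    linarith [hneg s hdet]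
  obtain ⟨κ, hκ, hM⟩ := kappa_aux L hd hdnn hinj
  -- choice of delta
  obtain ⟨δ, hδ, hδa, hη⟩ : ∃ δ > 0, δ < a ∧
      (δ + (∑ i, ‖L i‖) * (Real.exp (δ * H) - 1)) * Fintype.card (Fin (m + 1)) ≤ κ / 2 := by
    have hc : ContinuousAt (fun δ : ℝ => (δ + (∑ i, ‖L i‖) * (Real.exp (δ * H) - 1)) *
        Fintype.card (Fin (m + 1))) 0 := by fun_prop
    have h1 : ∀ᶠ δ in nhds (0 : ℝ), (δ + (∑ i, ‖L i‖) * (Real.exp (δ * H) - 1)) *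
        Fintype.card (Fin (m + 1)) < κ / 2 := by
      apply hc.eventually (gt_mem_nhds _)
      simp; positivity
    have h2 := h1.and (gt_mem_nhds ha)
    obtain ⟨δ, hδ, hδ0⟩ := ((h2.filter_mono nhdsWithin_le_nhds).and
      (self_mem_nhdsWithin (s := Set.Ioi (0:ℝ)))).exists
    exact ⟨δ, hδ0, hδ.2, hδ.1.le⟩
  set P : ℝ → Prop := fun b => ∃ C ≥ 0, ∀ t, -H ≤ t → ‖x t‖ ≤ C * Real.exp (b * t) with hP
  have hstep : ∀ b, 0 ≤ b → P b → P (b - δ / 2) := by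
    rintro b hb ⟨C1, hC1, hxb⟩
    have hF2 : ∀ t, 0 ≤ t → ‖F t‖ ≤ (D * C1) * Real.exp ((b - a) * t) := by
      intro t ht
      refine (hFK t ht (C1 * Real.exp (b * t)) ?_).trans (le_of_eq ?_)
      · intro τ hτ
        refine (hxb τ (by linarith [hτ.1])).trans ?_
        have := hτ.2
        gcongr
      · rw [show (b - a) * t = -a * t + b * t by ring, Real.exp_add]; ring
    obtain ⟨C, hC⟩ := step_aux L hd hdnn 0 hd0 H hHle κ hκ hM a δ hδ hδa hη b hb F x hx C1
      (D * C1) hC1 (by positivity) hxb hF2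
    exact ext_aux x H hxc _ 2 C hC
  obtain ⟨B, hB⟩ : ∃ B, P B := by
    obtain ⟨B, C, hBC⟩ := growth_aux L hd hdnn H hH0 hHle F x hxc hx D hD0 (by
      intro t ht K hK
      have hK0 : 0 ≤ K := (norm_nonneg _).trans (hK t ⟨by linarith, le_rfl⟩)
      refine (hFK t ht K hK).trans ?_
      have : Real.exp (-a * t) ≤ 1 := by
        rw [Real.exp_le_one_iff]; nlinarith
      calc _ ≤ D * 1 * K := by gcongr
        _ = _ := by ring)
    exact ⟨B, ext_aux x H hxc _ 1 C hBC⟩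
  obtain ⟨b, hb, C, hC0, hC⟩ : ∃ b < 0, P b := by
    by_contra! hcon
    have hall : ∀ k : ℕ, P (B - k * (δ / 2)) := by
      intro k
      induction k with
      | zero => simpa using hB
      | succ k ih =>
        have h1 : 0 ≤ B - k * (δ / 2) := by
          by_contra! h
          exact hcon _ h ih
        have := hstep _ h1 ih
        convert this using 1
        push_cast; ring
    obtain ⟨k, hk⟩ := exists_nat_gt (B / (δ / 2))
    rw [div_lt_iff₀ (by positivity)] at hk
    exact hcon _ (by linarith) (hall k)
  refine ⟨C + 1, by positivity, -b, by linarith, fun t ht => ?_⟩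
  refine (hC t (by linarith)).trans ?_
  rw [neg_neg]
  gcongr
  linarith
end

section
/- Suppose there exists ρ > 0 such that every characteristic zero λ satisfies Re λ ≤ −ρ. Let x be a solution of the perturbed equation with ‖F(t)‖ ≤ γ(t)·‖x_t‖ + K₀ for all t ≥ 0, where K₀ ≥ 0 and γ : [0,∞) → [0,∞) is continuous with e^{a t} γ(t) → 0 as t → ∞ for some a > 0. Then x is uniformly bounded: sup_{t ≥ −h} ‖x(t)‖ < ∞. -/
open Filter MeasureTheory

theorem aux_compact {a b : ℝ} {E : Type*} [NormedAddCommGroup E] [NormedSpace ℂ E] [ProperSpace E]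
    (T : (BoundedContinuousFunction (Set.Icc a b) E) →L[ℂ] (BoundedContinuousFunction (Set.Icc a b) E))
    (C : ℝ) (hC : ∀ x s t, ‖T x s - T x t‖ ≤ C * ‖x‖ * |(s : ℝ) - t|) : IsCompactOperator T := by
  rw [isCompactOperator_iff_exists_mem_nhds_isCompact_closure_image]
  refine ⟨Metric.closedBall 0 1, Metric.closedBall_mem_nhds 0 one_pos, ?_⟩
  refine BoundedContinuousFunction.arzela_ascoli (Metric.closedBall 0 ‖T‖)
    (isCompact_closedBall 0 ‖T‖) _ ?_ ?_
  · rintro f t ⟨x, hx, rfl⟩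
    simp only [mem_closedBall_zero_iff] at hx ⊢
    calc ‖T x t‖ ≤ ‖T x‖ := (T x).norm_coe_le_norm t
      _ ≤ ‖T‖ * ‖x‖ := T.le_opNorm x
      _ ≤ ‖T‖ * 1 := by gcongr
      _ = ‖T‖ := mul_one _
  · have hb : Tendsto (fun d : ℝ => |C| * d) (nhds 0) (nhds 0) := by
      have : Continuous (fun d : ℝ => |C| * d) := by fun_prop
      simpa using this.tendsto 0
    refine (Metric.uniformEquicontinuous_of_continuity_modulus (fun d => |C| * d) hb _ ?_).equicontinuous
    rintro s t ⟨f, x, hx, rfl⟩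
    simp only [mem_closedBall_zero_iff] at hx
    rw [dist_eq_norm]
    refine (hC x s t).trans ?_
    rw [Subtype.dist_eq, Real.dist_eq]
    have : C * ‖x‖ ≤ |C| := by
      calc C * ‖x‖ ≤ |C| * ‖x‖ := by gcongr; exact le_abs_self C
        _ ≤ |C| * 1 := by gcongr
        _ = |C| := mul_one _
    gcongr

theorem aux_spectral {Y : Type*} [NormedAddCommGroup Y] [NormedSpace ℂ Y] [CompleteSpace Y]
    (T : Y →L[ℂ] Y) (hT : IsCompactOperator T)
    (hev : ∀ (μ : ℂ) (x : Y), μ ≠ 0 → x ≠ 0 → T x = μ • x → ‖μ‖ < 1) :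
    ∃ N : ℕ, ‖T ^ N‖ ≤ 1 / 2 := by
  rcases subsingleton_or_nontrivial Y with hY | hY
  · refine ⟨0, ?_⟩
    have : T ^ 0 = 0 := by ext x; exact Subsingleton.elim _ _
    rw [this]; norm_num
  have hsp : spectralRadius ℂ T < (1 : NNReal) := by
    refine spectrum.spectralRadius_lt_of_forall_lt T ?_
    intro z hz
    by_cases hz0 : z = 0
    · simp [hz0]
    · obtain ⟨v, hv⟩ := ((hT.hasEigenvalue_iff_mem_spectrum hz0).2 hz).exists_hasEigenvector
      have := hev z v hz0 hv.2 (by simpa using hv.apply_eq_smul)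
      exact_mod_cast this
  have hg := spectrum.pow_norm_pow_one_div_tendsto_nhds_spectralRadius T
  obtain ⟨r, hr1, hr2⟩ := ENNReal.lt_iff_exists_nnreal_btwn.1 hsp
  have hr2' : (r : ℝ) < 1 := by exact_mod_cast hr2
  have h1 := hg.eventually (gt_mem_nhds hr1)
  have h2 : Tendsto (fun n : ℕ => (r : ℝ) ^ n) atTop (nhds 0) :=
    tendsto_pow_atTop_nhds_zero_of_lt_one r.2 hr2'
  have h3 := h2.eventually (gt_mem_nhds (show (0 : ℝ) < 1 / 2 by norm_num))
  obtain ⟨N, ⟨hN1, hN2⟩, hN3⟩ := ((h1.and h3).and (eventually_gt_atTop 0)).exists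
  refine ⟨N, le_trans ?_ hN2.le⟩
  have h4 : ‖T ^ N‖ ^ (1 / N : ℝ) < r := by
    rw [← ENNReal.ofReal_coe_nnreal, ENNReal.ofReal_lt_ofReal_iff_of_nonneg (by positivity)] at hN1
    exact hN1
  calc ‖T ^ N‖ = (‖T ^ N‖ ^ (1 / N : ℝ)) ^ N := by
        rw [one_div, Real.rpow_inv_natCast_pow (norm_nonneg _) hN3.ne']
    _ ≤ (r : ℝ) ^ N := by gcongr

theorem aux_seq {Y : Type*} [NormedAddCommGroup Y] [NormedSpace ℂ Y]
    (T : Y →L[ℂ] Y) (N : ℕ) (hN : ‖T ^ N‖ ≤ 1 / 2) (C D : ℝ) (hC : 0 ≤ C) (hD : 0 ≤ D)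
    (ε : ℕ → ℝ) (hε0 : ∀ k, 0 ≤ ε k) (hε : Tendsto ε atTop (nhds 0))
    (ξ g : ℕ → Y) (hξ : ∀ k, ξ (k + 1) = T (ξ k) + g k)
    (hg : ∀ k, ‖g k‖ ≤ C * (ε k * ‖ξ (k + 1)‖ + D)) :
    ∃ B, ∀ k, ‖ξ k‖ ≤ B := by
  let W : Y → ℝ := fun y => ∑ j ∈ Finset.range N, ‖(T ^ j) y‖
  obtain ⟨M, hM1, hM⟩ : ∃ M : ℝ, 1 ≤ M ∧ ∀ y, W y ≤ M * ‖y‖ := by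
    refine ⟨1 + ∑ j ∈ Finset.range N, ‖T ^ j‖, ?_, ?_⟩
    · have : 0 ≤ ∑ j ∈ Finset.range N, ‖T ^ j‖ := Finset.sum_nonneg fun _ _ => norm_nonneg _
      linarith
    · intro y
      have h1 : W y ≤ (∑ j ∈ Finset.range N, ‖T ^ j‖) * ‖y‖ := by
        simp only [W, Finset.sum_mul]
        gcongr with j
        exact (T ^ j).le_opNorm y
      nlinarith [norm_nonneg y]
  have hWnn : ∀ y, 0 ≤ W y := fun y => Finset.sum_nonneg fun _ _ => norm_nonneg _
  have hWT : ∀ y, W (T y) ≤ W y - ‖y‖ / 2 := by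
    intro y
    have h1 : W (T y) = ∑ j ∈ Finset.range N, ‖(T ^ (j + 1)) y‖ := by
      simp only [W]
      refine Finset.sum_congr rfl fun j _ => ?_
      rw [pow_succ]; rfl
    have h2 := Finset.sum_range_succ (fun j => ‖(T ^ j) y‖) N
    have h3 := Finset.sum_range_succ' (fun j => ‖(T ^ j) y‖) N
    have h4 : ‖(T ^ N) y‖ ≤ 1 / 2 * ‖y‖ := ((T ^ N).le_opNorm y).trans (by gcongr)
    have h5 : (T ^ 0) y = y := rfl
    rw [h5] at h3
    rw [h1]
    simp only [W]
    linarith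
  have hW2 : ∀ y, ‖y‖ ≤ 2 * W y := fun y => by linarith [hWT y, hWnn (T y)]
  have hWadd : ∀ y z, W (y + z) ≤ W y + W z := by
    intro y z
    simp only [W, ← Finset.sum_add_distrib, map_add]
    gcongr
    exact norm_add_le _ _
  have hM0 : 0 < M := by linarith
  set q : ℝ := 1 / (4 * M) with hq
  have hq0 : 0 < q := by positivity
  have hqM : q * M = 1 / 4 := by rw [hq]; field_simp
  have hq1 : q ≤ 1 / 4 := by nlinarith
  have hev : ∀ᶠ k in atTop, 2 * M * C * ε k ≤ q := by
    have : Tendsto (fun k => 2 * M * C * ε k) atTop (nhds 0) := by simpa using hε.const_mul (2 * M * C)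
    exact this.eventually_le_const hq0
  obtain ⟨K, hK⟩ := eventually_atTop.1 hev
  have hstep : ∀ k ≥ K, (1 - q) * W (ξ (k + 1)) ≤ (1 - 2 * q) * W (ξ k) + M * C * D := by
    intro k hk
    have h1 := hK k hk
    have h2 : W (ξ (k + 1)) ≤ W (ξ k) - ‖ξ k‖ / 2 + M * ‖g k‖ := by
      rw [hξ k]
      linarith [hWadd (T (ξ k)) (g k), hWT (ξ k), hM (g k)]
    have h3 : M * ‖g k‖ ≤ q * W (ξ (k + 1)) + M * C * D := by
      have h4 : M * ‖g k‖ ≤ M * (C * (ε k * ‖ξ (k + 1)‖ + D)) := by gcongr; exact hg k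
      have h5 : M * C * ε k * ‖ξ (k + 1)‖ ≤ M * C * ε k * (2 * W (ξ (k + 1))) := by
        have := hε0 k
        gcongr
        exact hW2 _
      have h6 : 2 * M * C * ε k * W (ξ (k + 1)) ≤ q * W (ξ (k + 1)) := by
        gcongr
      nlinarith
    have h7 : 2 * q * W (ξ k) ≤ ‖ξ k‖ / 2 := by
      have := mul_le_mul_of_nonneg_left (hM (ξ k)) hq0.le
      have e : q * (M * ‖ξ k‖) = 1 / 4 * ‖ξ k‖ := by rw [← mul_assoc, hqM]
      linarith
    linarith
  let B : ℝ := W (ξ K) + M * C * D / q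
  have hB : ∀ j, W (ξ (K + j)) ≤ B := by
    intro j
    induction j with
    | zero =>
      simp only [add_zero, B]
      have : 0 ≤ M * C * D / q := by positivity
      linarith
    | succ j ih =>
      have h1 := hstep (K + j) (by omega)
      have h2 : M * C * D ≤ q * B := by
        simp only [B, mul_add]
        rw [mul_div_cancel₀ _ hq0.ne']
        have := mul_nonneg hq0.le (hWnn (ξ K))
        linarith
      have h3 : (1 - 2 * q) * W (ξ (K + j)) ≤ (1 - 2 * q) * B := by
        apply mul_le_mul_of_nonneg_left ih; linarith
      have h4 : (1 - q) * W (ξ (K + j + 1)) ≤ (1 - q) * B := by linarith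
      exact le_of_mul_le_mul_left h4 (by linarith)
  refine ⟨2 * B + ∑ j ∈ Finset.range K, ‖ξ j‖, fun k => ?_⟩
  have hs : 0 ≤ ∑ j ∈ Finset.range K, ‖ξ j‖ := Finset.sum_nonneg fun _ _ => norm_nonneg _
  have hB0 : 0 ≤ B := (hWnn _).trans (hB 0)
  rcases lt_or_ge k K with hk | hk
  · have := Finset.single_le_sum (f := fun j => ‖ξ j‖) (fun _ _ => norm_nonneg _) (Finset.mem_range.2 hk)
    linarith
  · obtain ⟨j, rfl⟩ := Nat.exists_eq_add_of_le hk
    linarith [hW2 (ξ (K + j)), hB j]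

/-- Vanishing Fourier coefficients force a continuous periodic function to vanish. -/
theorem aux_fourier {L : ℝ} (hL : 0 < L) (f : ℝ → ℂ) (hf : ContinuousOn f (Set.Icc 0 L))
    (h0 : f 0 = f L)
    (hc : ∀ k : ℤ, ∫ t in (0 : ℝ)..L, Complex.exp (-(2 * Real.pi * Complex.I * k / L) * t) * f t = 0) :
    ∀ t ∈ Set.Icc 0 L, f t = 0 := by
  have : Fact (0 < L) := ⟨hL⟩
  have hcont : Continuous (AddCircle.liftIco L 0 f) :=
    AddCircle.liftIco_zero_continuous h0 hf
  let g : C(AddCircle L, ℂ) := ⟨AddCircle.liftIco L 0 f, hcont⟩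
  have hg : fourierCoeff g = 0 := by
    funext k
    show fourierCoeff (AddCircle.liftIco L 0 f) k = 0
    rw [fourierCoeff_eq_intervalIntegral _ _ 0, zero_add]
    rw [intervalIntegral.integral_congr_Ioo_of_le (g := fun t : ℝ =>
      Complex.exp (-(2 * Real.pi * Complex.I * k / L) * t) * f t) hL.le, hc k, smul_zero]
    intro x hx
    simp only
    rw [AddCircle.liftIco_coe_apply (by simpa using Set.Ioo_subset_Ico_self hx), fourier_coe_apply,
      smul_eq_mul]
    congr 2
    push_cast
    ring
  have hz : ∀ t ∈ Set.Ico 0 L, f t = 0 := by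
    intro t ht
    have h1 := has_pointwise_sum_fourier_series_of_summable (f := g) (by rw [hg]; exact summable_zero) (t : AddCircle L)
    rw [hg] at h1
    simp only [Pi.zero_apply, smul_eq_mul, zero_mul] at h1
    have h2 := h1.unique hasSum_zero
    have h3 : g (t : AddCircle L) = f t := AddCircle.liftIco_coe_apply (by simpa using ht)
    rw [← h3, h2]
  intro t ht
  rcases ht.2.lt_or_eq with h | h
  · exact hz t ⟨ht.1, h⟩
  · rw [h, ← h0]; exact hz 0 ⟨le_rfl, hL⟩

/-- `mulVecE` as a continuous linear map. -/
noncomputable def mulVecCLM {n : ℕ} (A : Matrix (Fin n) (Fin n) ℂ) :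
    EuclideanSpace ℂ (Fin n) →L[ℂ] EuclideanSpace ℂ (Fin n) :=
  LinearMap.toContinuousLinearMap (Matrix.toEuclideanLin A)

theorem mulVecCLM_apply {n : ℕ} (A : Matrix (Fin n) (Fin n) ℂ) (v : EuclideanSpace ℂ (Fin n)) :
    mulVecCLM A v = mulVecE A v := rfl

theorem aux_char {n m : ℕ} (A : Fin (m + 1) → Matrix (Fin n) (Fin n) ℂ)
    (hd : Fin (m + 1) → ℝ) (s : ℂ) (c : EuclideanSpace ℂ (Fin n)) (hc : c ≠ 0)
    (h : s • c = ∑ i, mulVecCLM (A i) (Complex.exp (-(hd i : ℂ) * s) • c)) :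
    charFn A hd s = 0 := by
  unfold charFn
  rw [← Matrix.exists_mulVec_eq_zero_iff]
  refine ⟨c.ofLp, ?_, ?_⟩
  · intro h0
    apply hc
    ext j
    exact congrFun h0 j
  · have h2 := congrArg (fun v : EuclideanSpace ℂ (Fin n) => v.ofLp) h
    simp only [mulVecCLM_apply, mulVecE, Matrix.toEuclideanLin, WithLp.ofLp_sum] at h2
    rw [Matrix.sub_mulVec, Matrix.smul_mulVec, Matrix.one_mulVec, Matrix.sum_mulVec, sub_eq_zero]
    simp only [Matrix.smul_mulVec]
    simpa [Matrix.mulVec_smul] using h2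

theorem aux_shift {E : Type*} [NormedAddCommGroup E] [NormedSpace ℝ E] [CompleteSpace E]
    (u : ℝ → E) (hu : Continuous u) {L h : ℝ} (hh : 0 ≤ h) (hhL : h ≤ L)
    (hper : ∀ t ∈ Set.Icc (-L) 0, u (t + L) = u t) :
    ∫ t in (0 : ℝ)..L, u (t - h) = ∫ t in (0 : ℝ)..L, u t := by
  have hi : ∀ a b : ℝ, IntervalIntegrable u volume a b := fun a b => hu.intervalIntegrable a b
  rw [intervalIntegral.integral_comp_sub_right u h, zero_sub,
    ← intervalIntegral.integral_add_adjacent_intervals (hi (-h) 0) (hi 0 (L - h)),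
    ← intervalIntegral.integral_add_adjacent_intervals (hi 0 (L - h)) (hi (L - h) L), add_comm]
  congr 1
  have h1 : ∫ t in (-h)..0, u t = ∫ t in (-h)..0, u (t + L) := by
    refine intervalIntegral.integral_congr fun t ht => ?_
    rw [Set.uIcc_of_le (by linarith)] at ht
    exact (hper t ⟨by linarith [ht.1], ht.2⟩).symm
  rw [h1, intervalIntegral.integral_comp_add_right u L]
  congr 1 <;> ring

theorem aux_eig {n m : ℕ} (A : Fin (m + 1) → Matrix (Fin n) (Fin n) ℂ)
    (hd : Fin (m + 1) → ℝ) (hdnn : ∀ i, 0 ≤ hd i) {L : ℝ} (hL : 0 < L) (hdL : ∀ i, hd i ≤ L)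
    (ρ : ℝ) (hρ : 0 < ρ) (hneg : ∀ z : ℂ, charFn A hd z = 0 → z.re ≤ -ρ)
    (x : ℝ → EuclideanSpace ℂ (Fin n)) (hxc : Continuous x) (μ : ℂ) (hμ : μ ≠ 0)
    (hper : ∀ t ∈ Set.Icc (-L) 0, x (t + L) = μ • x t)
    (hder : ∀ t ∈ Set.Ioo 0 L, HasDerivAt x (∑ i, mulVecCLM (A i) (x (t - hd i))) t)
    (hμ1 : 1 ≤ ‖μ‖) : ∀ t ∈ Set.Icc (-L) L, x t = 0 := by
  have hLc : (L : ℂ) ≠ 0 := by exact_mod_cast hL.ne'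
  let l0 : ℂ := Complex.log μ / L
  let l : ℤ → ℂ := fun k => l0 + 2 * Real.pi * Complex.I * k / L
  have hexpl : ∀ k, Complex.exp (-l k * L) = μ⁻¹ := by
    intro k
    have : -l k * L = -(Complex.log μ + k * (2 * Real.pi * Complex.I)) := by
      simp only [l, l0]; field_simp
    rw [this, Complex.exp_neg, Complex.exp_add, Complex.exp_log hμ, Complex.exp_int_mul_two_pi_mul_I,
      mul_one]
  have hre : ∀ k, 0 ≤ (l k).re := by
    intro k
    have h1 : ‖Complex.exp (-l k * L)‖ ≤ 1 := by
      rw [hexpl, norm_inv]; exact inv_le_one_of_one_le₀ hμ1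
    rw [Complex.norm_exp, Real.exp_le_one_iff] at h1
    simp at h1
    exact nonneg_of_mul_nonneg_left h1 hL
  let u : ℤ → ℝ → EuclideanSpace ℂ (Fin n) := fun k t => Complex.exp (-l k * t) • x t
  have huc : ∀ k, Continuous (u k) := by intro k; fun_prop
  have huper : ∀ k, ∀ t ∈ Set.Icc (-L) 0, u k (t + L) = u k t := by
    intro k t ht
    simp only [u]
    rw [hper t ht, smul_smul]
    congr 1
    push_cast
    rw [mul_add, Complex.exp_add, hexpl, mul_assoc, inv_mul_cancel₀ hμ, mul_one]
  have hc : ∀ k, ∫ t in (0 : ℝ)..L, u k t = 0 := by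
    intro k
    by_contra hne
    have hz := aux_char A hd (l k) _ hne ?_
    · linarith [hneg _ hz, hre k]
    have hdu : ∀ t ∈ Set.Ioo 0 L, HasDerivAt (u k)
        ((∑ i, mulVecCLM (A i) (Complex.exp (-l k * t) • x (t - hd i))) - l k • u k t) t := by
      intro t ht
      have h1 : HasDerivAt (fun t : ℝ => Complex.exp (-l k * t)) (Complex.exp (-l k * t) * (-l k)) t := by
        have := ((hasDerivAt_id (t : ℂ)).const_mul (-l k)).cexp.comp_ofReal
        simpa using this
      have h2 := h1.smul (hder t ht)
      refine h2.congr_deriv ?_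
      simp only [map_smul, ← Finset.smul_sum, u, smul_smul]
      rw [sub_eq_add_neg, ← neg_smul]
      congr 2
      ring
    have hint1 : ∀ i, Continuous (fun t : ℝ => mulVecCLM (A i) (Complex.exp (-l k * t) • x (t - hd i))) := by
      intro i; fun_prop
    have hsm : Continuous (fun t : ℝ => l k • u k t) := (huc k).const_smul (l k)
    have hFTC := intervalIntegral.integral_eq_sub_of_hasDerivAt_of_le hL.le (huc k).continuousOn hdu
      (((continuous_finsetSum _ fun i _ => hint1 i).sub hsm).intervalIntegrable _ _)
  
    have hu0 : u k L = u k 0 := by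
      have := huper k 0 ⟨by linarith, le_rfl⟩
      simpa using this
    rw [hu0, sub_self, intervalIntegral.integral_sub
      (Continuous.intervalIntegrable (continuous_finsetSum _ fun i _ => hint1 i) _ _)
      (hsm.intervalIntegrable _ _), sub_eq_zero,
      intervalIntegral.integral_smul, intervalIntegral.integral_finsetSum
        (fun i _ => (hint1 i).intervalIntegrable _ _)] at hFTC
    rw [← hFTC]
    refine Finset.sum_congr rfl fun i _ => ?_
    rw [ContinuousLinearMap.intervalIntegral_comp_comm _
      (Continuous.intervalIntegrable (by fun_prop) _ _)]
    congr 1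
    rw [← aux_shift (u k) (huc k) (hdnn i) (hdL i) (huper k), ← intervalIntegral.integral_smul]
    refine intervalIntegral.integral_congr fun t _ => ?_
    simp only [u, smul_smul, ← Complex.exp_add]
    congr 2
    push_cast
    ring
  have hpos : ∀ t ∈ Set.Icc 0 L, x t = 0 := by
    intro t ht
    ext j
    have h1 := aux_fourier hL (fun t => Complex.exp (-l0 * t) * x t j) (by fun_prop) ?_ ?_ t ht
    · simpa using h1
    · have := congrArg (fun v : EuclideanSpace ℂ (Fin n) => v j) (huper 0 0 ⟨by linarith, le_rfl⟩)
      simpa [u, l] using this.symm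
    · intro k
      have h2 := congrArg (EuclideanSpace.proj j : EuclideanSpace ℂ (Fin n) →L[ℂ] ℂ) (hc k)
      rw [← ContinuousLinearMap.intervalIntegral_comp_comm _
        ((huc k).intervalIntegrable _ _)] at h2
      rw [map_zero] at h2
      rw [← h2]
      refine intervalIntegral.integral_congr fun t _ => ?_
      have h3 : (EuclideanSpace.proj j : EuclideanSpace ℂ (Fin n) →L[ℂ] ℂ) (u k t) =
        Complex.exp (-l k * t) * x t j := rfl
      rw [h3]
      simp only [← mul_assoc, ← Complex.exp_add, l]
      congr 2
      ring
  intro t ht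
  rcases le_total 0 t with h | h
  · exact hpos t ⟨h, ht.2⟩
  · have h1 := hper t ⟨ht.1, h⟩
    rw [hpos (t + L) ⟨by linarith [ht.1], by linarith⟩] at h1
    exact (smul_eq_zero.1 h1.symm).resolve_left hμ

/-- The state space: continuous functions on `[-L, L]`. -/
abbrev StateY (n : ℕ) (L : ℝ) := BoundedContinuousFunction (Set.Icc (-L) L) (EuclideanSpace ℂ (Fin n))

/-- Constant extension to the real line. -/
noncomputable def extY {n : ℕ} {L : ℝ} (hL : -L ≤ L) (x : StateY n L) (t : ℝ) :
    EuclideanSpace ℂ (Fin n) := x (Set.projIcc (-L) L hL t)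

theorem extY_cont {n : ℕ} {L : ℝ} (hL : -L ≤ L) (x : StateY n L) : Continuous (extY hL x) :=
  x.continuous.comp continuous_projIcc

theorem extY_of_mem {n : ℕ} {L : ℝ} (hL : -L ≤ L) (x : StateY n L) {t : ℝ} (ht : t ∈ Set.Icc (-L) L) :
    extY hL x t = x ⟨t, ht⟩ := by
  unfold extY; rw [Set.projIcc_of_mem hL ht]

theorem extY_norm {n : ℕ} {L : ℝ} (hL : -L ≤ L) (x : StateY n L) (t : ℝ) : ‖extY hL x t‖ ≤ ‖x‖ :=
  x.norm_coe_le_norm _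

/-- Right-hand side of the delay equation. -/
noncomputable def rhsY {n m : ℕ} (A : Fin (m + 1) → Matrix (Fin n) (Fin n) ℂ)
    (hd : Fin (m + 1) → ℝ) {L : ℝ} (hL : -L ≤ L) (x : StateY n L) (s : ℝ) :
    EuclideanSpace ℂ (Fin n) := ∑ i, mulVecCLM (A i) (extY hL x (s - hd i))

theorem rhsY_cont {n m : ℕ} (A : Fin (m + 1) → Matrix (Fin n) (Fin n) ℂ)
    (hd : Fin (m + 1) → ℝ) {L : ℝ} (hL : -L ≤ L) (x : StateY n L) : Continuous (rhsY A hd hL x) := by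
  have := extY_cont hL x
  unfold rhsY
  fun_prop

/-- Bound for the right-hand side. -/
noncomputable def bdY {n m : ℕ} (A : Fin (m + 1) → Matrix (Fin n) (Fin n) ℂ) : ℝ :=
  1 + ∑ i, ‖mulVecCLM (A i)‖

theorem bdY_pos {n m : ℕ} (A : Fin (m + 1) → Matrix (Fin n) (Fin n) ℂ) : 0 < bdY A := by
  have : 0 ≤ ∑ i, ‖mulVecCLM (A i)‖ := Finset.sum_nonneg fun _ _ => norm_nonneg _
  unfold bdY; linarith

theorem rhsY_norm' {n m : ℕ} (A : Fin (m + 1) → Matrix (Fin n) (Fin n) ℂ)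
    (hd : Fin (m + 1) → ℝ) {L : ℝ} (hL : -L ≤ L) (x : StateY n L) (s c : ℝ) (hc0 : 0 ≤ c)
    (hc : ∀ i, ‖extY hL x (s - hd i)‖ ≤ c) :
    ‖rhsY A hd hL x s‖ ≤ bdY A * c := by
  unfold rhsY bdY
  calc _ ≤ ∑ i, ‖mulVecCLM (A i) (extY hL x (s - hd i))‖ := norm_sum_le _ _
    _ ≤ ∑ i, ‖mulVecCLM (A i)‖ * c := by
        gcongr with i
        exact ((mulVecCLM (A i)).le_opNorm _).trans (by gcongr; exact hc i)
    _ ≤ _ := by rw [← Finset.sum_mul]; gcongr; linarith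

theorem rhsY_norm {n m : ℕ} (A : Fin (m + 1) → Matrix (Fin n) (Fin n) ℂ)
    (hd : Fin (m + 1) → ℝ) {L : ℝ} (hL : -L ≤ L) (x : StateY n L) (s : ℝ) :
    ‖rhsY A hd hL x s‖ ≤ bdY A * ‖x‖ :=
  rhsY_norm' A hd hL x s _ (norm_nonneg _) fun _ => extY_norm _ _ _

/-- The primitive `t ↦ ∫_0^{max t 0} f` as an element of the state space. -/
noncomputable def primY {n : ℕ} (L : ℝ) (f : ℝ → EuclideanSpace ℂ (Fin n)) (hf : Continuous f) :
    StateY n L :=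
  BoundedContinuousFunction.mkOfCompact ⟨fun t => ∫ s in (0 : ℝ)..max (t : ℝ) 0, f s, by
    have h := intervalIntegral.continuous_primitive (fun a b => hf.intervalIntegrable (μ := volume) a b) 0
    exact h.comp (continuous_subtype_val.max continuous_const)⟩

theorem primY_apply {n : ℕ} (L : ℝ) (f : ℝ → EuclideanSpace ℂ (Fin n)) (hf : Continuous f)
    (t : Set.Icc (-L) L) : primY L f hf t = ∫ s in (0 : ℝ)..max (t : ℝ) 0, f s := rfl

theorem primY_norm {n : ℕ} {L : ℝ} (hL : 0 ≤ L) (f : ℝ → EuclideanSpace ℂ (Fin n)) (hf : Continuous f)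
    (c : ℝ) (hc0 : 0 ≤ c) (hc : ∀ s ∈ Set.Icc 0 L, ‖f s‖ ≤ c) : ‖primY L f hf‖ ≤ c * L := by
  rw [BoundedContinuousFunction.norm_le (by positivity)]
  intro t
  rw [primY_apply]
  have h1 : max (t : ℝ) 0 ≤ L := max_le t.2.2 hL
  have h0 : 0 ≤ max (t : ℝ) 0 := le_max_right _ _
  refine (intervalIntegral.norm_integral_le_of_norm_le_const (C := c) ?_).trans ?_
  · intro s hs
    rw [Set.uIoc_of_le h0] at hs
    exact hc s ⟨hs.1.le, hs.2.trans h1⟩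
  · rw [sub_zero, abs_of_nonneg h0]; gcongr

/-- The Volterra operator. -/
noncomputable def volY {n m : ℕ} (A : Fin (m + 1) → Matrix (Fin n) (Fin n) ℂ)
    (hd : Fin (m + 1) → ℝ) {L : ℝ} (hL : 0 ≤ L) : StateY n L →L[ℂ] StateY n L :=
  LinearMap.mkContinuous
    { toFun := fun x => primY L (rhsY A hd (neg_le_self hL) x) (rhsY_cont A hd _ x)
      map_add' := fun x y => by
        ext1 t
        rw [BoundedContinuousFunction.add_apply, primY_apply, primY_apply, primY_apply,
          ← intervalIntegral.integral_add ((rhsY_cont A hd _ x).intervalIntegrable _ _)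
          ((rhsY_cont A hd _ y).intervalIntegrable _ _)]
        congr 1
        funext s
        simp [rhsY, extY, Finset.sum_add_distrib]
      map_smul' := fun c x => by
        ext1 t
        rw [RingHom.id_apply, BoundedContinuousFunction.coe_smul]
        show _ = c • (primY L (rhsY A hd (neg_le_self hL) x) (rhsY_cont A hd _ x)) t
        rw [primY_apply, primY_apply, ← intervalIntegral.integral_smul]
        congr 1
        funext s
        simp [rhsY, extY, Finset.smul_sum] }
    (bdY A * L) (fun x => by
      have := primY_norm hL _ (rhsY_cont A hd (neg_le_self hL) x) (bdY A * ‖x‖)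
        (mul_nonneg (bdY_pos A).le (norm_nonneg _)) (fun s _ => rhsY_norm A hd _ x s)
      simp only [LinearMap.coe_mk, AddHom.coe_mk]
      linarith)

theorem volY_apply {n m : ℕ} (A : Fin (m + 1) → Matrix (Fin n) (Fin n) ℂ)
    (hd : Fin (m + 1) → ℝ) {L : ℝ} (hL : 0 ≤ L) (x : StateY n L) (t : Set.Icc (-L) L) :
    volY A hd hL x t = ∫ s in (0 : ℝ)..max (t : ℝ) 0, rhsY A hd (neg_le_self hL) x s := rfl

/-- The shift operator. -/
noncomputable def shY (n : ℕ) {L : ℝ} (hL : 0 ≤ L) : StateY n L →L[ℂ] StateY n L :=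
  LinearMap.mkContinuous
    { toFun := fun x => BoundedContinuousFunction.mkOfCompact
        ⟨fun t => extY (neg_le_self hL) x (min (t : ℝ) 0 + L), by
          have := extY_cont (neg_le_self hL) x
          fun_prop⟩
      map_add' := fun x y => by ext1 t; rfl
      map_smul' := fun c x => by ext1 t; rfl }
    1 (fun x => by
      rw [one_mul, BoundedContinuousFunction.norm_le (norm_nonneg _)]
      intro t
      exact extY_norm _ _ _)

theorem shY_apply {n : ℕ} {L : ℝ} (hL : 0 ≤ L) (x : StateY n L) (t : Set.Icc (-L) L) :
    shY n hL x t = extY (neg_le_self hL) x (min (t : ℝ) 0 + L) := rfl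

theorem volY_compact {n m : ℕ} (A : Fin (m + 1) → Matrix (Fin n) (Fin n) ℂ)
    (hd : Fin (m + 1) → ℝ) {L : ℝ} (hL : 0 ≤ L) : IsCompactOperator (volY A hd hL) := by
  refine aux_compact _ (bdY A) fun x s t => ?_
  rw [volY_apply, volY_apply, intervalIntegral.integral_interval_sub_left
    ((rhsY_cont A hd _ x).intervalIntegrable _ _) ((rhsY_cont A hd _ x).intervalIntegrable _ _)]
  refine (intervalIntegral.norm_integral_le_of_norm_le_const (C := bdY A * ‖x‖)
    fun s _ => rhsY_norm A hd _ x s).trans ?_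
  have := (bdY_pos A).le
  refine mul_le_mul_of_nonneg_left ?_ (by positivity)
  exact abs_max_sub_max_le_abs (s : ℝ) t 0

theorem shY_sq_compact {n : ℕ} {L : ℝ} (hL : 0 ≤ L) : IsCompactOperator (shY n hL * shY n hL) := by
  refine aux_compact _ 0 fun x s t => ?_
  have h : ∀ t : Set.Icc (-L) L, (shY n hL * shY n hL) x t = extY (neg_le_self hL) x L := by
    intro t
    have h1 : min (t : ℝ) 0 + L ∈ Set.Icc (-L) L :=
      ⟨by have := t.2.1; have : -L ≤ min (t : ℝ) 0 := le_min this (by linarith)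
          linarith, by linarith [min_le_right (t : ℝ) 0]⟩
    show shY n hL (shY n hL x) t = _
    rw [shY_apply, extY_of_mem _ _ h1, shY_apply]
    have h2 : 0 ≤ min (t : ℝ) 0 + L := by
      have := t.2.1
      have : -L ≤ min (t : ℝ) 0 := le_min this (by linarith)
      linarith
    simp only
    rw [min_eq_right h2, zero_add]
  rw [h s, h t]
  simp

theorem volY_inj {n m : ℕ} (A : Fin (m + 1) → Matrix (Fin n) (Fin n) ℂ)
    (hd : Fin (m + 1) → ℝ) (hdnn : ∀ i, 0 ≤ hd i) {L : ℝ} (hL : 0 ≤ L) (x : StateY n L)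
    (hx : volY A hd hL x = x) : x = 0 := by
  have hM := bdY_pos A
  set M := bdY A with hMdef
  have key : ∀ k : ℕ, ∀ t : Set.Icc (-L) L,
      ‖x t‖ ≤ ‖x‖ * (1 / 2) ^ k * Real.exp (2 * M * max (t : ℝ) 0) := by
    intro k
    induction k with
    | zero =>
      intro t
      have h1 : 1 ≤ Real.exp (2 * M * max (t : ℝ) 0) := Real.one_le_exp (by positivity)
      have h2 := x.norm_coe_le_norm t
      rw [pow_zero, mul_one]
      nlinarith [norm_nonneg x]
    | succ k ih =>
      intro t
      set c : ℝ := ‖x‖ * (1 / 2) ^ k with hc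
      have hc0 : 0 ≤ c := by positivity
      have h0 : 0 ≤ max (t : ℝ) 0 := le_max_right _ _
      have hb : ∀ s ∈ Set.Ioc 0 (max (t : ℝ) 0),
          ‖rhsY A hd (neg_le_self hL) x s‖ ≤ M * (c * Real.exp (2 * M * s)) := by
        intro s hs
        refine rhsY_norm' A hd _ x s _ (by positivity) fun i => ?_
        refine (ih _).trans ?_
        gcongr
        refine max_le ?_ hs.1.le
        rw [Set.coe_projIcc]
        refine max_le (by linarith [hs.1]) ((min_le_right _ _).trans (by linarith [hdnn i]))
      have hxt : x t = volY A hd hL x t := by rw [hx]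
      rw [hxt, volY_apply]
      have h3 := intervalIntegral.norm_integral_le_of_norm_le (μ := volume) h0
        (Filter.Eventually.of_forall hb)
        (Continuous.intervalIntegrable (by fun_prop) _ _)
      refine h3.trans ?_
      have h4 : ∫ s in (0 : ℝ)..max (t : ℝ) 0, M * (c * Real.exp (2 * M * s)) =
          c / 2 * Real.exp (2 * M * max (t : ℝ) 0) - c / 2 * Real.exp (2 * M * 0) := by
        refine intervalIntegral.integral_eq_sub_of_hasDerivAt (f := fun s => c / 2 * Real.exp (2 * M * s))
          (fun s _ => ?_) (Continuous.intervalIntegrable (by fun_prop) _ _)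
        have := (((hasDerivAt_id s).const_mul (2 * M)).exp).const_mul (c / 2)
        refine this.congr_deriv ?_
        simp only [id]; ring
      rw [h4, pow_succ]
      have : 0 ≤ c / 2 * Real.exp (2 * M * 0) := by positivity
      rw [← mul_assoc, ← hc]
      linarith
  ext1 t
  have hlim : Tendsto (fun k : ℕ => ‖x‖ * (1 / 2) ^ k * Real.exp (2 * M * max (t : ℝ) 0)) atTop (nhds 0) := by
    have := ((tendsto_pow_atTop_nhds_zero_of_lt_one (r := (1 / 2 : ℝ)) (by norm_num)
      (by norm_num)).const_mul ‖x‖).mul_const (Real.exp (2 * M * max (t : ℝ) 0))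
    simpa using this
  have := ge_of_tendsto' hlim (fun k => key k t)
  exact norm_le_zero_iff.1 this

theorem volY_inv {n m : ℕ} (A : Fin (m + 1) → Matrix (Fin n) (Fin n) ℂ)
    (hd : Fin (m + 1) → ℝ) (hdnn : ∀ i, 0 ≤ hd i) {L : ℝ} (hL : 0 ≤ L) :
    ∃ R : StateY n L →L[ℂ] StateY n L, R * (1 - volY A hd hL) = 1 ∧ (1 - volY A hd hL) * R = 1 := by
  have h := (volY_compact A hd hL).hasEigenvalue_or_mem_resolventSet (one_ne_zero (α := ℂ))
  rcases h with h | h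
  · obtain ⟨v, hv⟩ := h.exists_hasEigenvector
    exact absurd (volY_inj A hd hdnn hL v (by simpa using hv.apply_eq_smul)) hv.2
  · rw [spectrum.mem_resolventSet_iff, map_one] at h
    obtain ⟨u, hu⟩ := h
    exact ⟨↑u⁻¹, by rw [← hu]; simp, by rw [← hu]; simp⟩

theorem eigY {n m : ℕ} (A : Fin (m + 1) → Matrix (Fin n) (Fin n) ℂ)
    (hd : Fin (m + 1) → ℝ) (hdnn : ∀ i, 0 ≤ hd i) {L : ℝ} (hL : 0 < L) (hdL : ∀ i, hd i ≤ L)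
    (ρ : ℝ) (hρ : 0 < ρ) (hneg : ∀ z : ℂ, charFn A hd z = 0 → z.re ≤ -ρ)
    (μ : ℂ) (hμ : μ ≠ 0) (y : StateY n L) (hy : y ≠ 0)
    (he : shY n hL.le y = μ • (y - volY A hd hL.le y)) : ‖μ‖ < 1 := by
  by_contra hμ1
  push Not at hμ1
  apply hy
  have hL' := neg_le_self hL.le
  have hz := aux_eig A hd hdnn hL hdL ρ hρ hneg (extY hL' y) (extY_cont _ _) μ hμ ?_ ?_ hμ1
  · ext1 t
    have := hz t t.2
    rwa [extY_of_mem _ _ t.2] at this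
  · intro t ht
    have htm : t ∈ Set.Icc (-L) L := ⟨ht.1, by linarith [ht.2]⟩
    have h1 := DFunLike.congr_fun he ⟨t, htm⟩
    rw [shY_apply] at h1
    simp only [BoundedContinuousFunction.coe_smul, BoundedContinuousFunction.sub_apply, volY_apply] at h1
    rw [min_eq_left ht.2, max_eq_right ht.2, intervalIntegral.integral_same, sub_zero] at h1
    rw [h1, extY_of_mem _ _ htm]
  · intro t ht
    have h2 : ∀ r ∈ Set.Icc 0 L, extY hL' y r = μ⁻¹ • extY hL' y L + ∫ s in (0 : ℝ)..r, rhsY A hd hL' y s := by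
      intro r hr
      have htm : r ∈ Set.Icc (-L) L := ⟨by linarith [hr.1], hr.2⟩
      have h1 := DFunLike.congr_fun he ⟨r, htm⟩
      rw [shY_apply] at h1
      simp only [BoundedContinuousFunction.coe_smul, BoundedContinuousFunction.sub_apply, volY_apply] at h1
      rw [min_eq_right hr.1, max_eq_left hr.1, zero_add] at h1
      rw [h1, extY_of_mem _ _ htm, smul_smul, inv_mul_cancel₀ hμ, one_smul]
      abel
    have h3 : HasDerivAt (fun r => μ⁻¹ • extY hL' y L + ∫ s in (0 : ℝ)..r, rhsY A hd hL' y s)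
        (rhsY A hd hL' y t) t :=
      ((rhsY_cont A hd hL' y).integral_hasStrictDerivAt 0 t).hasDerivAt.const_add _
    refine h3.congr_of_eventuallyEq ?_
    filter_upwards [Icc_mem_nhds ht.1 ht.2] with r hr
    exact h2 r hr

theorem ring_aux {S : Type*} [Ring S] (R V Q : S) (h : (1 - V) * R = 1) :
    (R * Q) ^ 2 = R * (Q * Q) + R * Q * (V * (R * Q)) := by
  have hRe : R = 1 + V * R := by
    rw [sub_mul, one_mul] at h
    rw [← h]; abel
  calc (R * Q) ^ 2 = R * Q * R * Q := by noncomm_ring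
    _ = R * Q * (1 + V * R) * Q := by rw [← hRe]
    _ = _ := by noncomm_ring

theorem sq_eig {Y : Type*} [NormedAddCommGroup Y] [NormedSpace ℂ Y] (W : Y →L[ℂ] Y)
    (hev : ∀ (μ : ℂ) (y : Y), μ ≠ 0 → y ≠ 0 → W y = μ • y → ‖μ‖ < 1) :
    ∀ (μ : ℂ) (y : Y), μ ≠ 0 → y ≠ 0 → (W ^ 2) y = μ • y → ‖μ‖ < 1 := by
  intro ν y hν hy h
  obtain ⟨μ, hμ⟩ := IsAlgClosed.exists_pow_nat_eq ν (n := 2) (by norm_num)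
  have hμ0 : μ ≠ 0 := by rintro rfl; apply hν; rw [← hμ]; norm_num
  have h' : W (W y) = μ ^ 2 • y := by rw [hμ, ← h, pow_two]; rfl
  have hlt : ‖μ‖ < 1 := by
    by_cases hz : W y + μ • y = 0
    · have := hev (-μ) y (neg_ne_zero.2 hμ0) hy (by rw [neg_smul]; exact eq_neg_of_add_eq_zero_left hz)
      simpa using this
    · refine hev μ _ hμ0 hz ?_
      rw [map_add, map_smul, h', smul_add, smul_smul, pow_two, add_comm]
  rw [← hμ, norm_pow]
  exact pow_lt_one₀ (norm_nonneg _) hlt (by norm_num)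

theorem stepY {n m : ℕ} (A : Fin (m + 1) → Matrix (Fin n) (Fin n) ℂ)
    (hd : Fin (m + 1) → ℝ) (hdnn : ∀ i, 0 ≤ hd i) {L : ℝ} (hL : 0 < L) (hdL : ∀ i, hd i ≤ L)
    (ρ : ℝ) (hρ : 0 < ρ) (hneg : ∀ z : ℂ, charFn A hd z = 0 → z.re ≤ -ρ) :
    ∃ (R : StateY n L →L[ℂ] StateY n L) (N : ℕ), R * (1 - volY A hd hL.le) = 1 ∧
      ‖(R * shY n hL.le) ^ N‖ ≤ 1 / 2 := by
  obtain ⟨R, hR1, hR2⟩ := volY_inv A hd hdnn hL.le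
  set V := volY A hd hL.le with hV
  set Q := shY n hL.le with hQ
  set W := R * Q with hW
  have hev : ∀ (μ : ℂ) (y : StateY n L), μ ≠ 0 → y ≠ 0 → W y = μ • y → ‖μ‖ < 1 := by
    intro μ y hμ hy h
    refine eigY A hd hdnn hL hdL ρ hρ hneg μ hμ y hy ?_
    have h1 : ((1 - V) * R) (Q y) = Q y := by rw [hR2]; rfl
    have h2 : ((1 - V) * R) (Q y) = (1 - V) (W y) := rfl
    rw [← hQ, ← h1, h2, h, map_smul]
    rfl
  have hcomp : IsCompactOperator (W ^ 2 : StateY n L →L[ℂ] StateY n L) := by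
    have e : W ^ 2 = R * (Q * Q) + W * (V * W) := ring_aux R V Q hR2
    rw [e]
    exact ((shY_sq_compact hL.le).clm_comp R).add (((volY_compact A hd hL.le).comp_clm W).clm_comp W)
  obtain ⟨N, hN⟩ := aux_spectral (W ^ 2) hcomp (sq_eig W hev)
  exact ⟨R, 2 * N, hR1, by rw [pow_mul]; exact hN⟩

/-- The piece of a trajectory around `P`, as an element of the state space. -/
noncomputable def segY {n : ℕ} (L : ℝ) (x : ℝ → EuclideanSpace ℂ (Fin n)) {b : ℝ}
    (hx : ContinuousOn x (Set.Ici b)) (P : ℝ) (hP : b ≤ P - L) : StateY n L :=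
  BoundedContinuousFunction.mkOfCompact ⟨fun t => x (P + t), by
    refine hx.comp_continuous (by fun_prop) fun t => ?_
    have := t.2.1
    simp only [Set.mem_Ici]
    linarith⟩

theorem segY_apply {n : ℕ} (L : ℝ) (x : ℝ → EuclideanSpace ℂ (Fin n)) {b : ℝ}
    (hx : ContinuousOn x (Set.Ici b)) (P : ℝ) (hP : b ≤ P - L) (t : Set.Icc (-L) L) :
    segY L x hx P hP t = x (P + t) := rfl

theorem segY_step {n m : ℕ} (A : Fin (m + 1) → Matrix (Fin n) (Fin n) ℂ)
    (hd : Fin (m + 1) → ℝ) (hdnn : ∀ i, 0 ≤ hd i) {L : ℝ} (hL : 0 < L) (hdL : ∀ i, hd i ≤ L)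
    (F : ℝ → EuclideanSpace ℂ (Fin n)) (hFc : ContinuousOn F (Set.Ici 0))
    (x : ℝ → EuclideanSpace ℂ (Fin n)) {b : ℝ} (hxc : ContinuousOn x (Set.Ici b))
    (hx : ∀ t > 0, HasDerivAt x ((∑ i, mulVecE (A i) (x (t - hd i))) + F t) t)
    (P : ℝ) (hP : b ≤ P - L) (hP' : b ≤ P + L - L) (hP0 : 0 ≤ P)
    (hFP : Continuous (fun s => F (P + L + max s 0))) :
    (1 - volY A hd hL.le) (segY L x hxc (P + L) hP') =
      shY n hL.le (segY L x hxc P hP) + primY L (fun s => F (P + L + max s 0)) hFP := by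
  have hL' := neg_le_self hL.le
  ext1 t
  have e1 : ((1 - volY A hd hL.le) (segY L x hxc (P + L) hP')) t =
    segY L x hxc (P + L) hP' t - volY A hd hL.le (segY L x hxc (P + L) hP') t := rfl
  rw [e1, BoundedContinuousFunction.add_apply, volY_apply, shY_apply, primY_apply, segY_apply,
    sub_eq_iff_eq_add]
  have hmem : min (t : ℝ) 0 + L ∈ Set.Icc (-L) L := by
    have h1 : -L ≤ min (t : ℝ) 0 := le_min t.2.1 (by linarith)
    exact ⟨by linarith, by linarith [min_le_right (t : ℝ) 0]⟩
  rw [extY_of_mem _ _ hmem, segY_apply]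
  simp only
  rcases le_total (t : ℝ) 0 with ht | ht
  · rw [min_eq_left ht, max_eq_right ht, intervalIntegral.integral_same,
      intervalIntegral.integral_same, add_zero, add_zero]
    congr 1; ring
  · rw [min_eq_right ht, max_eq_left ht, zero_add, add_assoc (x (P + L)),
      ← intervalIntegral.integral_add (hFP.intervalIntegrable _ _)
        ((rhsY_cont A hd _ _).intervalIntegrable _ _)]
    have hFTC := intervalIntegral.integral_eq_sub_of_hasDerivAt (a := 0) (b := (t : ℝ))
      (f := fun s => x (P + L + s))
      (f' := fun s => F (P + L + max s 0) + rhsY A hd hL' (segY L x hxc (P + L) hP') s) ?_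
      ((hFP.add (rhsY_cont A hd _ _)).intervalIntegrable _ _)
    · rw [hFTC]; simp
    · intro s hs
      rw [Set.uIcc_of_le ht] at hs
      have h1 := (hx (P + L + s) (by linarith [hs.1])).comp_const_add (P + L) s
      refine h1.congr_deriv ?_
      rw [max_eq_left hs.1, add_comm]
      congr 1
      unfold rhsY
      refine Finset.sum_congr rfl fun i _ => ?_
      have hm : s - hd i ∈ Set.Icc (-L) L :=
        ⟨by linarith [hs.1, hdL i], by linarith [hs.2, t.2.2, hdnn i]⟩
      rw [extY_of_mem _ _ hm, segY_apply, mulVecCLM_apply]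
      congr 2
      simp only
      ring

/-- **Corollary 3.5** (uniform boundedness): if all characteristic zeros have real
part `≤ -ρ < 0` and `‖F(t)‖ ≤ γ(t) ‖x_t‖ + K₀` with `e^{a t} γ(t) → 0` for some
`a > 0`, then the solution is uniformly bounded on `[-h, ∞)`. -/
theorem stmt7 {n m : ℕ} (hn : 1 ≤ n) (hm : 1 ≤ m)
    (A : Fin (m + 1) → Matrix (Fin n) (Fin n) ℂ)
    (hd : Fin (m + 1) → ℝ) (hd0 : hd 0 = 0) (hdnn : ∀ i, 0 ≤ hd i)
    (H : ℝ) (hH : IsGreatest (Set.range hd) H)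
    (ρ : ℝ) (hρ : 0 < ρ)
    (hneg : ∀ z : ℂ, charFn A hd z = 0 → z.re ≤ -ρ)
    (F : ℝ → EuclideanSpace ℂ (Fin n)) (hFc : ContinuousOn F (Set.Ici 0))
    (x : ℝ → EuclideanSpace ℂ (Fin n)) (hxc : ContinuousOn x (Set.Ici (-H)))
    (hx : ∀ t > 0, HasDerivAt x ((∑ i, mulVecE (A i) (x (t - hd i))) + F t) t)
    (γ : ℝ → ℝ) (hγc : ContinuousOn γ (Set.Ici 0)) (hγnn : ∀ t, 0 ≤ t → 0 ≤ γ t)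
    (K₀ : ℝ) (hK₀ : 0 ≤ K₀)
    (hFb : ∀ t, 0 ≤ t → ‖F t‖ ≤ γ t * slidingSup H x t + K₀)
    (a : ℝ) (ha : 0 < a)
    (hγdec : Tendsto (fun t => Real.exp (a * t) * γ t) atTop (nhds 0)) :
    ∃ B : ℝ, ∀ t, -H ≤ t → ‖x t‖ ≤ B := by
  have hH0 : 0 ≤ H := hd0 ▸ hH.2 ⟨0, rfl⟩
  set L : ℝ := H + 1 with hLdef
  have hL : 0 < L := by linarith
  have hdL : ∀ i, hd i ≤ L := fun i => by linarith [hH.2 ⟨i, rfl⟩]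
  obtain ⟨R, N, hR, hN⟩ := stepY A hd hdnn hL hdL ρ hρ hneg
  obtain ⟨T, hT⟩ := eventually_atTop.1 (hγdec.eventually_le_const (show (0 : ℝ) < 1 by norm_num))
  obtain ⟨K, hK⟩ := exists_nat_ge (T / L)
  rw [div_le_iff₀ hL] at hK
  let P : ℕ → ℝ := fun k => (K + k + 1 : ℝ) * L
  have hPL : ∀ k, K * L + L ≤ P k := by
    intro k
    have : 0 ≤ (k : ℝ) * L := by positivity
    simp only [P]; linarith
  have hKL : 0 ≤ (K : ℝ) * L := by positivity
  have hPs : ∀ k, P (k + 1) = P k + L := by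
    intro k; simp only [P]; push_cast; ring
  have hP : ∀ k, -H ≤ P k - L := fun k => by linarith [hPL k]
  let ξ : ℕ → StateY n L := fun k => segY L x hxc (P k) (hP k)
  have hFP : ∀ k, Continuous (fun s => F (P k + L + max s 0)) := by
    intro k
    refine hFc.comp_continuous (by fun_prop) fun s => ?_
    have := le_max_right s 0
    have := hPL k
    simp only [Set.mem_Ici]
    linarith
  have hrec : ∀ k, ξ (k + 1) = (R * shY n hL.le) (ξ k) + R (primY L _ (hFP k)) := by
    intro k
    have h1 : -H ≤ P k + L - L := by linarith [hPL k]
    have h2 : ξ (k + 1) = segY L x hxc (P k + L) h1 := by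
      simp only [ξ]
      congr 1
      exact hPs k
    have h3 := segY_step A hd hdnn hL hdL F hFc x hxc hx (P k) (hP k) h1 (by linarith [hPL k]) (hFP k)
    rw [← h2] at h3
    have h4 := congrArg R h3
    have h5 : R ((1 - volY A hd hL.le) (ξ (k + 1))) = (R * (1 - volY A hd hL.le)) (ξ (k + 1)) := rfl
    rw [h5, hR, map_add] at h4
    exact h4
  have hsl : ∀ k, ∀ s ∈ Set.Icc 0 L, slidingSup H x (P k + L + s) ≤ ‖ξ (k + 1)‖ := by
    intro k s hs
    unfold slidingSup
    refine csSup_le ((Set.nonempty_Icc.2 (by linarith)).image _) ?_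
    rintro _ ⟨τ, hτ, rfl⟩
    have hm : τ - P (k + 1) ∈ Set.Icc (-L) L := by
      rw [hPs]
      exact ⟨by linarith [hτ.1, hs.1], by linarith [hτ.2, hs.2]⟩
    have := (ξ (k + 1)).norm_coe_le_norm ⟨_, hm⟩
    simp only [ξ, segY_apply, add_sub_cancel] at this
    exact this
  let ε : ℕ → ℝ := fun k => Real.exp (-(a * (P k + L)))
  have hε : Tendsto ε atTop (nhds 0) := by
    refine Real.tendsto_exp_neg_atTop_nhds_zero.comp (Tendsto.const_mul_atTop ha ?_)
    refine tendsto_atTop_mono (f := fun k : ℕ => (k : ℝ) * L) (fun k => ?_)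
      (tendsto_natCast_atTop_atTop.atTop_mul_const hL)
    simp only [P]; linarith
  have hgb : ∀ k, ‖R (primY L _ (hFP k))‖ ≤ (‖R‖ * L) * (ε k * ‖ξ (k + 1)‖ + K₀) := by
    intro k
    have h1 : ‖primY L _ (hFP k)‖ ≤ (ε k * ‖ξ (k + 1)‖ + K₀) * L := by
      refine primY_norm hL.le _ _ _ (by positivity) fun s hs => ?_
      rw [max_eq_left hs.1]
      have h0 : T ≤ P k + L + s := by linarith [hPL k, hs.1]
      have h00 : 0 ≤ P k + L + s := by linarith [hPL k, hs.1]
      refine (hFb _ h00).trans ?_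
      have h2 := hT _ h0
      have h3 : γ (P k + L + s) ≤ ε k := by
        have h4 : γ (P k + L + s) ≤ Real.exp (-(a * (P k + L + s))) := by
          rw [Real.exp_neg, ← one_div, le_div_iff₀ (Real.exp_pos _)]
          linarith
        refine h4.trans (Real.exp_le_exp.2 ?_)
        nlinarith [hs.1]
      have h5 := hsl k s hs
      have h6 := hγnn _ h00
      have : γ (P k + L + s) * slidingSup H x (P k + L + s) ≤ ε k * ‖ξ (k + 1)‖ :=
        (mul_le_mul_of_nonneg_left h5 h6).trans (mul_le_mul_of_nonneg_right h3 (norm_nonneg _))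
      linarith
    calc _ ≤ ‖R‖ * ‖primY L _ (hFP k)‖ := R.le_opNorm _
      _ ≤ ‖R‖ * ((ε k * ‖ξ (k + 1)‖ + K₀) * L) := by gcongr
      _ = _ := by ring
  obtain ⟨B, hB⟩ := aux_seq (R * shY n hL.le) N hN (‖R‖ * L) K₀ (by positivity) hK₀ ε
    (fun k => (Real.exp_pos _).le) hε ξ _ hrec hgb
  obtain ⟨B', hB'⟩ := (isCompact_Icc (a := -H) (b := (K : ℝ) * L)).exists_bound_of_continuousOn
    (hxc.mono Set.Icc_subset_Ici_self)
  refine ⟨max B B', fun t ht => ?_⟩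
  rcases le_total t (K * L) with h | h
  · exact (hB' t ⟨ht, h⟩).trans (le_max_right _ _)
  · refine le_trans ?_ (le_max_left _ _)
    have hq : 0 ≤ (t - K * L) / L := div_nonneg (by linarith) hL.le
    have h1 := Nat.floor_le hq
    have h2 := Nat.lt_floor_add_one ((t - K * L) / L)
    set k := ⌊(t - K * L) / L⌋₊
    rw [le_div_iff₀ hL] at h1
    rw [div_lt_iff₀ hL] at h2
    have hm : t - P k ∈ Set.Icc (-L) L := by
      simp only [P]
      constructor <;> nlinarith
    have := (ξ k).norm_coe_le_norm ⟨_, hm⟩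
    simp only [ξ, segY_apply, add_sub_cancel] at this
    exact this.trans (hB k)
end

section
/- Suppose there exists ρ > 0 such that every characteristic zero λ satisfies Re λ ≤ −ρ. Then there exist M > 0 and c > 0 such that every continuous function y : [−h, ∞) → ℂⁿ that is differentiable on (0, ∞) and satisfies y'(t) = Σ_{i=0}^m A_i y(t−h_i) for all t > 0 obeys ‖y(t)‖ ≤ M e^{−c t} · sup_{τ ∈ [−h, 0]} ‖y(τ)‖ for all t ≥ 0; i.e., the limiting equation is globally uniformly exponentially stable. -/
open Filter MeasureTheory

open FourierTransform SchwartzMap in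
lemma planch {E : Type*} [NormedAddCommGroup E] [InnerProductSpace ℂ E] [CompleteSpace E]
    (f : ℝ → E) (hf1 : Integrable f) (hf2 : MemLp f 2) :
    eLpNorm (𝓕 f) 2 volume = eLpNorm f 2 volume := by
  set g : Lp E 2 (volume : Measure ℝ) := hf2.toLp f with hg
  have key : ∀ᵐ x ∂(volume : Measure ℝ), (𝓕 g : Lp E 2 (volume : Measure ℝ)) x = 𝓕 f x := by
    apply ae_eq_of_integral_contDiff_smul_eq
    · exact (Lp.memLp _).locallyIntegrable (by norm_num)
    · have : Continuous (𝓕 f) :=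
        VectorFourier.fourierIntegral_continuous Real.continuous_fourierChar
          (by exact continuous_inner) hf1
      exact this.locallyIntegrable
    · intro φ hφ hφc
      have hg₁ : HasCompactSupport (Complex.ofRealCLM ∘ φ) := hφc.comp_left rfl
      have hg₂ : ContDiff ℝ (⊤ : ℕ∞) (Complex.ofRealCLM ∘ φ) := by fun_prop
      set ψ : 𝓢(ℝ, ℂ) := hg₁.toSchwartzMap hg₂ with hψ
      have h1 := congrArg (fun T => T ψ) (MeasureTheory.Lp.fourier_toTemperedDistribution_eq g)
      simp only [TemperedDistribution.fourier_apply, Lp.toTemperedDistribution_apply] at h1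
      have h2 : ∫ x, (𝓕 ψ) x • g x = ∫ x, (𝓕 ψ) x • f x := by
        apply integral_congr_ae
        filter_upwards [hf2.coeFn_toLp] with x hx
        rw [hg, hx]
      have h3 : ∫ x, (𝓕 ψ) x • f x = ∫ x, ψ x • 𝓕 f x := by
        have := VectorFourier.integral_fourierIntegral_smul_eq_flip (μ := (volume : Measure ℝ))
          (ν := (volume : Measure ℝ)) (L := innerₗ ℝ) (f := (ψ : ℝ → ℂ)) (g := f)
          Real.continuous_fourierChar (by exact continuous_inner) ψ.integrable hf1
        rw [flip_innerₗ] at this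
        exact this
      rw [h2, h3] at h1
      have e : ∀ x, ψ x = (φ x : ℂ) := fun x => rfl
      simp only [e] at h1
      simpa using h1.symm
  rw [← eLpNorm_congr_ae key]
  have hn : ‖(𝓕 g : Lp E 2 (volume : Measure ℝ))‖ = ‖g‖ := Lp.norm_fourier_eq g
  rw [Lp.norm_def, Lp.norm_def, ENNReal.toReal_eq_toReal_iff' (Lp.eLpNorm_ne_top _)
    (Lp.eLpNorm_ne_top _)] at hn
  rw [hn]
  exact eLpNorm_congr_ae hf2.coeFn_toLp


section DDE
variable {E : Type*} [NormedAddCommGroup E] [InnerProductSpace ℂ E] [CompleteSpace E]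
variable {ι : Type*} [Fintype ι]

lemma exp_norm_le {a : ℝ} (ha : 0 ≤ a) {s : ℂ} (hs : 0 ≤ s.re) :
    ‖Complex.exp (-(a : ℂ) * s)‖ ≤ 1 := by
  rw [Complex.norm_exp]
  simp
  positivity

lemma resolvent_bound [FiniteDimensional ℂ E] (L : ι → E →L[ℂ] E) (h : ι → ℝ)
    (hh : ∀ i, 0 ≤ h i)
    (hL : ∀ s : ℂ, 0 ≤ s.re → ∀ v : E,
      s • v - ∑ i, Complex.exp (-(h i : ℂ) * s) • L i v = 0 → v = 0) :
    ∃ C : ℝ, 0 < C ∧ ∀ s : ℂ, 0 ≤ s.re → ∀ v : E,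
      ‖v‖ ≤ C * ‖s • v - ∑ i, Complex.exp (-(h i : ℂ) * s) • L i v‖ := by
  classical
  set B : ℝ := ∑ i, ‖L i‖ with hB
  have hB0 : 0 ≤ B := Finset.sum_nonneg fun i _ => norm_nonneg _
  have hsum : ∀ s : ℂ, 0 ≤ s.re → ∀ v : E,
      ‖∑ i, Complex.exp (-(h i : ℂ) * s) • L i v‖ ≤ B * ‖v‖ := by
    intro s hs v
    refine (norm_sum_le _ _).trans ?_
    rw [hB, Finset.sum_mul]
    refine Finset.sum_le_sum fun i _ => ?_
    rw [norm_smul]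
    calc _ ≤ 1 * (‖L i‖ * ‖v‖) := by
          gcongr
          · exact exp_norm_le (hh i) hs
          · exact (L i).le_opNorm v
      _ = _ := one_mul _
  have : ProperSpace E := FiniteDimensional.proper ℂ E
  set K : Set (ℂ × E) := (Metric.closedBall (0 : ℂ) (B + 1) ∩ {s | 0 ≤ s.re}) ×ˢ Metric.sphere (0 : E) 1
  have hK : IsCompact K := by
    refine IsCompact.prod ?_ (isCompact_sphere _ _)
    exact (isCompact_closedBall _ _).inter_right (isClosed_le continuous_const Complex.continuous_re)
  set Φ : ℂ × E → ℝ := fun p => ‖p.1 • p.2 - ∑ i, Complex.exp (-(h i : ℂ) * p.1) • L i p.2‖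
  have hΦ : Continuous Φ := by fun_prop
  obtain ⟨d, hd, hd1⟩ : ∃ d > 0, ∀ p ∈ K, d ≤ Φ p := by
    rcases K.eq_empty_or_nonempty with hE | hne
    · exact ⟨1, one_pos, by simp [hE]⟩
    · obtain ⟨p, hp, hmin⟩ := hK.exists_isMinOn hne hΦ.continuousOn
      refine ⟨Φ p, ?_, fun q hq => hmin hq⟩
      refine lt_of_le_of_ne (norm_nonneg _) fun h0 => ?_
      have := hL p.1 hp.1.2 p.2 (norm_eq_zero.1 h0.symm)
      have h1 : ‖p.2‖ = 1 := by simpa using hp.2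
      rw [this] at h1
      simp at h1
  refine ⟨max 1 d⁻¹, by positivity, fun s hs v => ?_⟩
  by_cases hv : v = 0
  · subst hv; simp
  have hv' : 0 < ‖v‖ := norm_pos_iff.2 hv
  by_cases hsB : ‖s‖ ≤ B + 1
  · have := hd1 (s, ((‖v‖⁻¹ : ℝ) : ℂ) • v) (by
      refine ⟨⟨by simpa using hsB, hs⟩, ?_⟩
      simp [norm_smul, hv'.ne'])
    have e : Φ (s, ((‖v‖⁻¹ : ℝ) : ℂ) • v) = ‖v‖⁻¹ *
        ‖s • v - ∑ i, Complex.exp (-(h i : ℂ) * s) • L i v‖ := by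
      simp only [Φ, map_smul]
      have : s • (((‖v‖⁻¹ : ℝ) : ℂ) • v) - ∑ i, Complex.exp (-(h i : ℂ) * s) • (((‖v‖⁻¹ : ℝ) : ℂ) • L i v)
        = ((‖v‖⁻¹ : ℝ) : ℂ) • (s • v - ∑ i, Complex.exp (-(h i : ℂ) * s) • L i v) := by
        rw [smul_sub, Finset.smul_sum, smul_comm s]
        simp only [smul_comm (((‖v‖⁻¹ : ℝ) : ℂ))]
      rw [this, norm_smul]
      simp
    rw [e] at this
    have h2 : ‖v‖ ≤ d⁻¹ * ‖s • v - ∑ i, Complex.exp (-(h i : ℂ) * s) • L i v‖ := by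
      rw [le_inv_mul_iff₀ hd, mul_comm]
      rwa [le_inv_mul_iff₀ hv'] at this
    exact h2.trans (by gcongr; exact le_max_right _ _)
  · push Not at hsB
    have h1 : ‖s • v‖ - ‖∑ i, Complex.exp (-(h i : ℂ) * s) • L i v‖ ≤
      ‖s • v - ∑ i, Complex.exp (-(h i : ℂ) * s) • L i v‖ := norm_sub_norm_le _ _
    have h2 := hsum s hs v
    rw [norm_smul] at h1
    have h3 : ‖v‖ ≤ 1 * ‖s • v - ∑ i, Complex.exp (-(h i : ℂ) * s) • L i v‖ := by nlinarith
    exact h3.trans (by gcongr; exact le_max_left _ _)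


open FourierTransform in
lemma fourier_intble (w : ℝ → E) (hw : Integrable w) (ξ : ℝ) :
    Integrable (fun v : ℝ => Complex.exp ((↑(-2 * Real.pi * inner ℝ v ξ) * Complex.I)) • w v) := by
  have := (Real.fourierIntegral_convergent_iff (μ := volume) (f := w) ξ).2 hw
  refine this.congr (Eventually.of_forall fun v => ?_)
  simp only [Circle.smul_def, Real.fourierChar_apply, mul_neg, neg_mul]

open FourierTransform in
lemma fourier_shift (T : E →L[ℂ] E) (c : ℂ) (a : ℝ) (w : ℝ → E) (hw : Integrable w) (ξ : ℝ) :
    𝓕 (fun t => c • T (w (t - a))) ξ =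
      (c * Complex.exp (-(a : ℂ) * (2 * Real.pi * Complex.I * ξ))) • T (𝓕 w ξ) := by
  rw [Real.fourier_eq', Real.fourier_eq', ← ContinuousLinearMap.integral_comp_comm,
    ← integral_smul, ← integral_add_right_eq_self _ a]
  · congr 1 with t
    rw [map_smul, smul_smul, smul_smul, add_sub_cancel_right, mul_comm _ c, mul_assoc c,
      ← Complex.exp_add]
    congr 3
    simp
    ring
  · exact fourier_intble w hw ξ

open FourierTransform in
lemma l2_bound (L : ι → E →L[ℂ] E) (h : ι → ℝ) (C : ℝ)
    (hres : ∀ s : ℂ, 0 ≤ s.re → ∀ v : E,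
      ‖v‖ ≤ C * ‖s • v - ∑ i, Complex.exp (-(h i : ℂ) * s) • L i v‖)
    (σ : ℝ) (hσ : 0 ≤ σ) (w G : ℝ → E) (hw : Integrable w) (hw2 : MemLp w 2)
    (hG : Integrable G) (hG2 : MemLp G 2)
    (hder : ∀ t, HasDerivAt w (-(σ : ℂ) • w t +
      ∑ i, Complex.exp (-(h i : ℂ) * σ) • L i (w (t - h i)) + G t) t) :
    eLpNorm w 2 volume ≤ ENNReal.ofReal C * eLpNorm G 2 volume := by
  rw [← planch w hw hw2, ← planch G hG hG2]
  have hi : ∀ i, Integrable (fun t => Complex.exp (-(h i : ℂ) * σ) • L i (w (t - h i))) := by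
    intro i
    exact ((L i).integrable_comp (hw.comp_sub_right (h i))).smul _
  have hs : Integrable (fun t => ∑ i, Complex.exp (-(h i : ℂ) * σ) • L i (w (t - h i))) :=
    integrable_finsetSum _ fun i _ => hi i
  have hσw : Integrable (fun t => -(σ : ℂ) • w t) := hw.smul _
  have hd : deriv w = fun t => -(σ : ℂ) • w t +
      ∑ i, Complex.exp (-(h i : ℂ) * σ) • L i (w (t - h i)) + G t :=
    funext fun t => (hder t).deriv
  have hd1 : Integrable (deriv w) := by
    rw [hd]; exact (hσw.add hs).add hG
  have hF := Real.fourier_deriv hw (fun t => (hder t).differentiableAt) hd1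
  refine eLpNorm_le_mul_eLpNorm_of_ae_le_mul (Eventually.of_forall fun ξ => ?_) 2
  have h1 := congrFun hF ξ
  have h2 : 𝓕 (deriv w) ξ = -(σ : ℂ) • 𝓕 w ξ + ∑ i, 𝓕 (fun t =>
      Complex.exp (-(h i : ℂ) * σ) • L i (w (t - h i))) ξ + 𝓕 G ξ := by
    rw [hd]
    simp only [Real.fourier_eq', smul_add, Finset.smul_sum]
    rw [integral_add, integral_add, integral_finsetSum, ← integral_smul]
    · simp only [smul_comm (-(σ : ℂ))]
    · intro i _
      exact fourier_intble _ (hi i) ξ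
    · exact fourier_intble _ hσw ξ
    · exact integrable_finsetSum _ fun i _ => fourier_intble _ (hi i) ξ
    · exact (fourier_intble _ hσw ξ).add (integrable_finsetSum _ fun i _ => fourier_intble _ (hi i) ξ)
    · exact fourier_intble _ hG ξ
  have h3 : 𝓕 G ξ = ((σ : ℂ) + 2 * Real.pi * Complex.I * ξ) • 𝓕 w ξ -
      ∑ i, Complex.exp (-(h i : ℂ) * ((σ : ℂ) + 2 * Real.pi * Complex.I * ξ)) • L i (𝓕 w ξ) := by
    rw [h1] at h2
    simp only [fourier_shift _ _ _ w hw, ← Complex.exp_add, ← mul_add] at h2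
    rw [add_smul, h2, neg_smul]
    abel
  rw [h3]
  exact hres _ (by simpa using hσ) _


lemma memLp_delay (L : ι → E →L[ℂ] E) (h : ι → ℝ) (c : ι → ℂ) (w : ℝ → E) (hw : MemLp w 2) :
    MemLp (fun t => ∑ i, c i • L i (w (t - h i))) 2 := by
  refine memLp_finsetSum _ fun i _ => ?_
  have : MemLp (fun t => w (t - h i)) 2 :=
    hw.comp_measurePreserving (measurePreserving_sub_right volume (h i))
  exact ((L i).comp_memLp' this).const_smul (c i)

lemma eLpNorm_delay (L : ι → E →L[ℂ] E) (h : ι → ℝ) (c : ι → ℂ) (a : ℝ) (hc : ∀ i, ‖c i‖ ≤ a)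
    (w : ℝ → E) (hw : MemLp w 2) (b : ℝ) (ha : 0 ≤ a) (hb : 0 ≤ b)
    (hwb : eLpNorm w 2 volume ≤ ENNReal.ofReal b) :
    eLpNorm (fun t => ∑ i, c i • L i (w (t - h i))) 2 volume ≤
      ENNReal.ofReal (a * (∑ i, ‖L i‖) * b) := by
  have hsh : ∀ i, MemLp (fun t => w (t - h i)) 2 := fun i =>
    hw.comp_measurePreserving (measurePreserving_sub_right volume (h i))
  have h1 : eLpNorm (∑ i, fun t => c i • L i (w (t - h i))) 2 volume ≤
      ∑ i, eLpNorm (fun t => c i • L i (w (t - h i))) 2 volume :=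
    eLpNorm_sum_le (fun i _ => (((L i).comp_memLp' (hsh i)).const_smul (c i)).1) (by norm_num)
  have e : (fun t => ∑ i, c i • L i (w (t - h i))) = ∑ i, fun t => c i • L i (w (t - h i)) := by
    ext t; simp
  rw [e]
  refine h1.trans ?_
  rw [Finset.mul_sum, Finset.sum_mul, ENNReal.ofReal_sum_of_nonneg (fun i _ => by positivity)]
  refine Finset.sum_le_sum fun i _ => ?_
  have h2 : eLpNorm (fun t => c i • L i (w (t - h i))) 2 volume ≤
      ENNReal.ofReal (a * ‖L i‖) * eLpNorm (fun t => w (t - h i)) 2 volume := by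
    refine eLpNorm_le_mul_eLpNorm_of_ae_le_mul (Eventually.of_forall fun t => ?_) 2
    rw [norm_smul, mul_assoc]
    gcongr
    · exact hc i
    · exact (L i).le_opNorm _
  have h3 : eLpNorm (fun t => w (t - h i)) 2 volume = eLpNorm w 2 volume :=
    eLpNorm_comp_measurePreserving hw.1 (measurePreserving_sub_right volume (h i))
  rw [h3] at h2
  refine h2.trans ?_
  rw [ENNReal.ofReal_mul (p := a * ‖L i‖) (q := b) (by positivity)]
  gcongr

lemma int_sq_le (w : ℝ → E) (hw : MemLp w 2) (a : ℝ) (ha : 0 ≤ a)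
    (h : eLpNorm w 2 volume ≤ ENNReal.ofReal a) :
    Integrable (fun t => ‖w t‖ ^ 2) ∧ ∫ t, ‖w t‖ ^ 2 ≤ a ^ 2 := by
  have h1 := (memLp_two_iff_integrable_sq_norm hw.1).1 hw
  refine ⟨h1, ?_⟩
  have h2 := hw.eLpNorm_eq_integral_rpow_norm (by norm_num) (by norm_num)
  rw [h2] at h
  rw [ENNReal.ofReal_le_ofReal_iff ha] at h
  have e : (∫ t, ‖w t‖ ^ (2 : ENNReal).toReal) = ∫ t, ‖w t‖ ^ 2 := by simp
  rw [e] at h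
  have h3 : 0 ≤ ∫ t, ‖w t‖ ^ 2 := integral_nonneg fun t => by positivity
  simp only [ENNReal.toReal_ofNat] at h
  calc ∫ t, ‖w t‖ ^ 2 = ((∫ t, ‖w t‖ ^ 2) ^ ((2 : ℝ)⁻¹)) ^ 2 := by
        rw [← Real.rpow_natCast, ← Real.rpow_mul h3]; simp
    _ ≤ a ^ 2 := by gcongr

lemma sup_bound (w w' : ℝ → E) (hd : ∀ t, HasDerivAt w (w' t) t) (h0 : w 0 = 0)
    (hw : MemLp w 2) (hw' : MemLp w' 2) (a b : ℝ) (ha : 0 ≤ a) (hb : 0 ≤ b)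
    (hwa : eLpNorm w 2 volume ≤ ENNReal.ofReal a)
    (hwb : eLpNorm w' 2 volume ≤ ENNReal.ofReal b) (T : ℝ) (hT : 0 ≤ T) :
    ‖w T‖ ≤ a + b := by
  obtain ⟨i1, j1⟩ := int_sq_le w hw a ha hwa
  obtain ⟨i2, j2⟩ := int_sq_le w' hw' b hb hwb
  have hc : Continuous w := continuous_iff_continuousAt.2 fun t => (hd t).continuousAt
  let : InnerProductSpace ℝ E := InnerProductSpace.complexToReal
  have hder : ∀ t, HasDerivAt (fun t => ‖w t‖ ^ 2) (2 * inner ℝ (w t) (w' t)) t :=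
    fun t => (hd t).norm_sq
  have h1 := intervalIntegral.sub_le_integral_of_hasDeriv_right_of_le (g := fun t => ‖w t‖ ^ 2)
    (φ := fun t => ‖w t‖ ^ 2 + ‖w' t‖ ^ 2) hT (by fun_prop)
    (fun x _ => (hder x).hasDerivWithinAt) (i1.add i2).integrableOn (fun x _ => by
      have := real_inner_le_norm (w x) (w' x)
      nlinarith [sq_nonneg (‖w x‖ - ‖w' x‖)])
  rw [intervalIntegral.integral_of_le hT] at h1
  have h2 : ∫ t in Set.Ioc 0 T, (‖w t‖ ^ 2 + ‖w' t‖ ^ 2) ≤ ∫ t, (‖w t‖ ^ 2 + ‖w' t‖ ^ 2) :=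
    setIntegral_le_integral (i1.add i2) (Eventually.of_forall fun t => by positivity)
  rw [integral_add i1 i2] at h2
  simp only [h0, norm_zero] at h1
  refine abs_le_of_sq_le_sq' ?_ (by positivity) |>.2
  nlinarith

lemma main_bound (L : ι → E →L[ℂ] E) (h : ι → ℝ) (hh : ∀ i, 0 ≤ h i) (C : ℝ) (hC : 0 ≤ C)
    (hres : ∀ s : ℂ, 0 ≤ s.re → ∀ v : E,
      ‖v‖ ≤ C * ‖s • v - ∑ i, Complex.exp (-(h i : ℂ) * s) • L i v‖)
    (σ S : ℝ) (hσ : 0 ≤ σ) (hS : σ ≤ S) (w G : ℝ → E) (hw : Integrable w) (hw2 : MemLp w 2)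
    (hG : Integrable G) (hG2 : MemLp G 2) (h0 : w 0 = 0)
    (hder : ∀ t, HasDerivAt w (-(σ : ℂ) • w t +
      ∑ i, Complex.exp (-(h i : ℂ) * σ) • L i (w (t - h i)) + G t) t)
    (g : ℝ) (hg : 0 ≤ g) (hGg : eLpNorm G 2 volume ≤ ENNReal.ofReal g) :
    eLpNorm w 2 volume ≤ ENNReal.ofReal (C * g) ∧
      ∀ T, 0 ≤ T → ‖w T‖ ≤ (C + S * C + (∑ i, ‖L i‖) * C + 1) * g := by
  have h1 : eLpNorm w 2 volume ≤ ENNReal.ofReal (C * g) := by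
    refine (l2_bound L h C hres σ hσ w G hw hw2 hG hG2 hder).trans ?_
    rw [ENNReal.ofReal_mul hC]
    gcongr
  refine ⟨h1, fun T hT => ?_⟩
  have hB0 : 0 ≤ ∑ i, ‖L i‖ := Finset.sum_nonneg fun i _ => norm_nonneg _
  have hS0 : 0 ≤ S := hσ.trans hS
  have m1 : MemLp (fun t => -(σ : ℂ) • w t) 2 := hw2.const_smul _
  have m2 := memLp_delay L h (fun i => Complex.exp (-(h i : ℂ) * σ)) w hw2
  have b1 : eLpNorm (fun t => -(σ : ℂ) • w t) 2 volume ≤ ENNReal.ofReal (S * (C * g)) := by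
    have : eLpNorm (fun t => -(σ : ℂ) • w t) 2 volume ≤
        ENNReal.ofReal S * eLpNorm w 2 volume := by
      refine eLpNorm_le_mul_eLpNorm_of_ae_le_mul (Eventually.of_forall fun t => ?_) 2
      rw [norm_smul]
      gcongr
      simpa [abs_of_nonneg hσ] using hS
    refine this.trans ?_
    rw [ENNReal.ofReal_mul hS0]
    gcongr
  have b2 := eLpNorm_delay L h (fun i => Complex.exp (-(h i : ℂ) * σ)) 1
    (fun i => exp_norm_le (hh i) (by simpa using hσ)) w hw2 (C * g) zero_le_one (by positivity) h1
  have b3 : eLpNorm (fun t => -(σ : ℂ) • w t +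
      ∑ i, Complex.exp (-(h i : ℂ) * σ) • L i (w (t - h i)) + G t) 2 volume ≤
      ENNReal.ofReal (S * (C * g) + 1 * (∑ i, ‖L i‖) * (C * g) + g) := by
    rw [ENNReal.ofReal_add (by positivity) (by positivity),
      ENNReal.ofReal_add (by positivity) (by positivity)]
    refine (eLpNorm_add_le (m1.add m2).1 hG2.1 (by norm_num)).trans ?_
    gcongr
    refine (eLpNorm_add_le m1.1 m2.1 (by norm_num)).trans ?_
    gcongr
  have := sup_bound w _ hder h0 hw2 ((m1.add m2).add hG2) (C * g) _ (by positivity) (by positivity)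
    h1 b3 T hT
  refine this.trans (le_of_eq ?_)
  ring


lemma main_bound2 (L : ι → E →L[ℂ] E) (h : ι → ℝ) (hh : ∀ i, 0 ≤ h i) (C : ℝ) (hC : 0 ≤ C)
    (H : ℝ) (hH0 : 0 ≤ H) (hH : ∀ i, h i ≤ H)
    (hres : ∀ s : ℂ, 0 ≤ s.re → ∀ v : E,
      ‖v‖ ≤ C * ‖s • v - ∑ i, Complex.exp (-(h i : ℂ) * s) • L i v‖)
    (σ S : ℝ) (hσ : 0 ≤ σ) (hS : σ ≤ S) (w G : ℝ → E) (hw : Integrable w) (hw2 : MemLp w 2)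
    (hG : Integrable G) (hG2 : MemLp G 2) (h0 : w 0 = 0)
    (hder : ∀ t, HasDerivAt w (-(σ : ℂ) • w t +
      ∑ i, Complex.exp (-(h i : ℂ) * σ) • L i (w (t - h i)) + G t) t)
    (htw : Integrable (fun t : ℝ => (t : ℂ) • w t)) (htw2 : MemLp (fun t : ℝ => (t : ℂ) • w t) 2)
    (htG : Integrable (fun t : ℝ => (t : ℂ) • G t)) (htG2 : MemLp (fun t : ℝ => (t : ℂ) • G t) 2)
    (g : ℝ) (hg : 0 ≤ g) (hGg : eLpNorm G 2 volume ≤ ENNReal.ofReal g)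
    (q : ℝ) (hq : 0 ≤ q)
    (htGg : eLpNorm (fun t : ℝ => (t : ℂ) • G t) 2 volume ≤ ENNReal.ofReal (q * g)) :
      ∀ T : ℝ, 0 ≤ T → ‖(T : ℂ) • w T‖ ≤ (C + S * C + (∑ i, ‖L i‖) * C + 1) *
        ((C + H * (∑ i, ‖L i‖) * C + q) * g) := by
  have hB0 : 0 ≤ ∑ i, ‖L i‖ := Finset.sum_nonneg fun i _ => norm_nonneg _
  obtain ⟨h1, -⟩ := main_bound L h hh C hC hres σ S hσ hS w G hw hw2 hG hG2 h0 hder g hg hGg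
  set c : ι → ℂ := fun i => (h i : ℂ) * Complex.exp (-(h i : ℂ) * σ) with hc
  have hcH : ∀ i, ‖c i‖ ≤ H := by
    intro i
    rw [hc, norm_mul]
    calc _ ≤ H * 1 := by
          gcongr
          · simpa [abs_of_nonneg (hh i)] using hH i
          · exact exp_norm_le (hh i) (by simpa using hσ)
      _ = H := mul_one _
  have m2 := memLp_delay L h c w hw2
  have i2 : Integrable (fun t => ∑ i, c i • L i (w (t - h i))) :=
    integrable_finsetSum _ fun i _ => ((L i).integrable_comp (hw.comp_sub_right (h i))).smul _
  have b2 := eLpNorm_delay L h c H hcH w hw2 (C * g) hH0 (by positivity) h1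
  have b3 : eLpNorm (fun t : ℝ => w t + ∑ i, c i • L i (w (t - h i)) + (t : ℂ) • G t) 2 volume ≤
      ENNReal.ofReal ((C + H * (∑ i, ‖L i‖) * C + q) * g) := by
    have e : (C + H * (∑ i, ‖L i‖) * C + q) * g = C * g + H * (∑ i, ‖L i‖) * (C * g) + q * g := by
      ring
    rw [e, ENNReal.ofReal_add (by positivity) (by positivity),
      ENNReal.ofReal_add (by positivity) (by positivity)]
    refine (eLpNorm_add_le (hw2.add m2).1 htG2.1 (by norm_num)).trans ?_
    gcongr
    refine (eLpNorm_add_le hw2.1 m2.1 (by norm_num)).trans ?_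
    gcongr
  refine (main_bound L h hh C hC hres σ S hσ hS (fun t : ℝ => (t : ℂ) • w t) _ htw htw2
    ((hw.add i2).add htG) ((hw2.add m2).add htG2) (by simp) (fun t => ?_) _ (by positivity) b3).2
  have hid : HasDerivAt (fun t : ℝ => (t : ℂ)) 1 t := by
    simpa using (hasDerivAt_id t).ofReal_comp
  have := hid.smul (hder t)
  refine this.congr_deriv ?_
  simp only [smul_add, Finset.smul_sum, hc, Complex.ofReal_sub, sub_smul, map_sub, smul_sub,
    Finset.sum_sub_distrib, map_smul, one_smul, smul_smul, mul_comm, Pi.add_apply]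
  abel

lemma decay_memLp (u : ℝ → E) (hu : Continuous u) (hu0 : ∀ t, t ≤ 0 → u t = 0) (K η : ℝ)
    (hη : 0 < η) (hb : ∀ t, 0 ≤ t → ‖u t‖ ≤ K * Real.exp (-η * t)) :
    Integrable u ∧ MemLp u 2 := by
  have hK : 0 ≤ K := by
    have := (norm_nonneg _).trans (hb 0 le_rfl)
    simpa using this
  have hi : Integrable u := by
    have h1 : IntegrableOn (fun t => K * Real.exp (-η * t)) (Set.Ioi 0) :=
      (exp_neg_integrableOn_Ioi 0 hη).const_mul K
    have h2 : IntegrableOn u (Set.Ioi 0) := by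
      refine Integrable.mono' h1 hu.aestronglyMeasurable ?_
      refine (ae_restrict_iff' measurableSet_Ioi).2 (Eventually.of_forall fun t ht => ?_)
      exact hb t (le_of_lt ht)
    rw [← integrableOn_univ, ← Set.Iic_union_Ioi (a := (0 : ℝ))]
    refine IntegrableOn.union ?_ h2
    refine (integrableOn_zero (μ := volume)).congr_fun (fun t ht => (hu0 t ht).symm)
      measurableSet_Iic
  refine ⟨hi, ?_⟩
  rw [memLp_two_iff_integrable_sq_norm hi.1]
  refine Integrable.mono' (hi.norm.const_mul K) (by fun_prop) (Eventually.of_forall fun t => ?_)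
  have : ‖u t‖ ≤ K := by
    rcases le_total t 0 with ht | ht
    · simpa [hu0 t ht] using hK
    · refine (hb t ht).trans (mul_le_of_le_one_right hK ?_)
      simp; positivity
  rw [Real.norm_of_nonneg (by positivity), pow_two]
  gcongr

lemma compact_bound (F : ℝ → E) (hF : Continuous F) (b f : ℝ) (hb : 0 ≤ b) (hf : 0 ≤ f)
    (h0 : ∀ t, t ∉ Set.Icc 0 b → F t = 0) (hbd : ∀ t, ‖F t‖ ≤ f) :
    Integrable F ∧ MemLp F 2 ∧ eLpNorm F 2 volume ≤ ENNReal.ofReal (f * Real.sqrt b) := by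
  have hcs : HasCompactSupport F := HasCompactSupport.intro isCompact_Icc (fun t ht => h0 t ht)
  refine ⟨hF.integrable_of_hasCompactSupport hcs, hF.memLp_of_hasCompactSupport hcs, ?_⟩
  have h1 : eLpNorm F 2 volume ≤ eLpNorm ((Set.Icc 0 b).indicator (fun _ : ℝ => f)) 2 volume := by
    refine eLpNorm_mono_real fun t => ?_
    by_cases ht : t ∈ Set.Icc 0 b
    · simpa [ht] using hbd t
    · simp only [Set.indicator_of_notMem ht, h0 t ht, norm_zero, le_refl]
  refine h1.trans ?_
  rw [eLpNorm_indicator_const measurableSet_Icc (by norm_num) (by norm_num)]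
  rw [Real.volume_Icc, ENNReal.ofReal_rpow_of_nonneg (by simpa using hb) (by positivity),
    ENNReal.ofReal_mul hf, Real.sqrt_eq_rpow, Real.enorm_eq_ofReal hf]
  simp


def IsSol (L : ι → E →L[ℂ] E) (h : ι → ℝ) (H : ℝ) (y : ℝ → E) : Prop :=
  ContinuousOn y (Set.Ici (-H)) ∧ ∀ t > 0, HasDerivAt y (∑ i, L i (y (t - h i))) t

lemma IsSol.shift {L : ι → E →L[ℂ] E} {h : ι → ℝ} {H : ℝ} {y : ℝ → E} (hy : IsSol L h H y)
    (a : ℝ) (ha : 0 ≤ a) : IsSol L h H (fun t => y (t + a)) := by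
  refine ⟨hy.1.comp (by fun_prop) fun t ht => ?_, fun t ht => ?_⟩
  · simp only [Set.mem_Ici] at ht ⊢; linarith
  · have := (hy.2 (t + a) (by linarith)).comp_add_const t a
    simpa [sub_add_eq_add_sub] using this

lemma IsSol.delay_cont {L : ι → E →L[ℂ] E} {h : ι → ℝ} {H : ℝ} {y : ℝ → E} (hy : IsSol L h H y)
    (hH : ∀ i, h i ≤ H) (i : ι) : ContinuousOn (fun t => y (t - h i)) (Set.Ici 0) := by
  refine hy.1.comp (by fun_prop) fun t ht => ?_
  simp only [Set.mem_Ici] at ht ⊢; linarith [hH i]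

lemma IsSol.right_deriv {L : ι → E →L[ℂ] E} {h : ι → ℝ} {H : ℝ} {y : ℝ → E} (hy : IsSol L h H y)
    (hH0 : 0 ≤ H) (hH : ∀ i, h i ≤ H) (t : ℝ) (ht : 0 ≤ t) :
    HasDerivWithinAt y (∑ i, L i (y (t - h i))) (Set.Ici t) t := by
  rcases ht.lt_or_eq with ht | rfl
  · exact (hy.2 t ht).hasDerivWithinAt
  · refine hasDerivWithinAt_Ici_of_tendsto_deriv (s := Set.Ioi 0)
      (fun x hx => (hy.2 x hx).differentiableAt.differentiableWithinAt) ?_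
      self_mem_nhdsWithin ?_
    · exact (hy.1 0 (by simpa using hH0)).mono fun x hx => by
        simp only [Set.mem_Ici, Set.mem_Ioi] at hx ⊢; linarith
    · have hc : ContinuousOn (fun t => ∑ i, L i (y (t - h i))) (Set.Ici 0) :=
        continuousOn_finsetSum _ fun i _ => (L i).continuous.comp_continuousOn (hy.delay_cont hH i)
      have h1 := (hc 0 (by simp)).mono (Set.Ioi_subset_Ici_self (a := (0 : ℝ)))
      refine Tendsto.congr' ?_ h1
      filter_upwards [self_mem_nhdsWithin] with x hx
      exact (hy.2 x hx).deriv.symm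

lemma IsSol.gronwall {L : ι → E →L[ℂ] E} {h : ι → ℝ} {H : ℝ} {y : ℝ → E} (hy : IsSol L h H y)
    (hh : ∀ i, 0 ≤ h i) (hH0 : 0 ≤ H) (hH : ∀ i, h i ≤ H) (N : ℝ)
    (hN : ∀ τ ∈ Set.Icc (-H) 0, ‖y τ‖ ≤ N) (T : ℝ) (hT : 0 ≤ T) :
    ‖y T‖ ≤ 2 * Real.exp ((2 * (∑ i, ‖L i‖) + 1) * T) * N := by
  set B := ∑ i, ‖L i‖ with hBdef
  have hB0 : 0 ≤ B := Finset.sum_nonneg fun i _ => norm_nonneg _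
  set β := 2 * B + 1 with hβ
  have hβ0 : 0 < β := by positivity
  have hN0 : 0 ≤ N := (norm_nonneg _).trans (hN 0 ⟨by linarith, le_rfl⟩)
  have hyc : ContinuousOn y (Set.Icc 0 T) := hy.1.mono fun x hx => by
    simp only [Set.mem_Ici]; linarith [hx.1]
  have hg : ContinuousOn (fun t => ‖y t‖ * Real.exp (-(β * t))) (Set.Icc 0 T) := by
    refine hyc.norm.mul ?_
    fun_prop
  obtain ⟨t0, ht0, hmax⟩ := isCompact_Icc.exists_isMaxOn ⟨0, le_rfl, hT⟩ hg
  set m0 := ‖y t0‖ * Real.exp (-(β * t0)) with hm0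
  set m := max m0 N with hm
  have hm_nn : 0 ≤ m := hN0.trans (le_max_right _ _)
  have hb : ∀ t ∈ Set.Icc 0 T, ‖y t‖ ≤ m * Real.exp (β * t) := by
    intro t ht
    have h1 : ‖y t‖ * Real.exp (-(β * t)) ≤ m := (hmax ht).trans (le_max_left _ _)
    rw [Real.exp_neg, ← div_eq_mul_inv, div_le_iff₀ (Real.exp_pos _)] at h1
    exact h1
  have hb2 : ∀ t ∈ Set.Icc 0 T, ∀ i, ‖y (t - h i)‖ ≤ m * Real.exp (β * t) := by
    intro t ht i
    rcases le_total 0 (t - h i) with hc | hc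
    · refine (hb _ ⟨hc, by linarith [ht.2, hh i]⟩).trans ?_
      gcongr
      linarith [hh i]
    · refine (hN _ ⟨by linarith [ht.1, hH i], hc⟩).trans ((le_max_right m0 N).trans ?_)
      refine le_mul_of_one_le_right hm_nn (Real.one_le_exp ?_)
      have := ht.1
      positivity
  have hfin : ∀ t ∈ Set.Icc 0 T, ‖y t‖ ≤ N + B * m * (Real.exp (β * t) / β) := by
    refine image_norm_le_of_norm_deriv_right_le_deriv_boundary
      (B' := fun t => B * m * Real.exp (β * t)) hyc
      (fun x hx => hy.right_deriv hH0 hH x hx.1) ?_ (fun x => ?_) (fun x hx => ?_)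
    · have := hN 0 ⟨by linarith, le_rfl⟩
      have h2 : 0 ≤ B * m * (Real.exp (β * 0) / β) := by positivity
      linarith
    · have h1 : HasDerivAt (fun t => Real.exp (β * t)) (Real.exp (β * x) * β) x := by
        simpa using ((hasDerivAt_id x).const_mul β).exp
      have h2 := ((h1.div_const β).const_mul (B * m)).const_add N
      refine h2.congr_deriv ?_
      field_simp
    · refine (norm_sum_le _ _).trans ?_
      rw [hBdef, Finset.sum_mul, Finset.sum_mul]
      refine Finset.sum_le_sum fun i _ => ?_
      rw [mul_assoc]
      refine ((L i).le_opNorm _).trans ?_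
      gcongr
      exact hb2 x ⟨hx.1, hx.2.le⟩ i
  have hm0le : m0 ≤ N + m / 2 := by
    have h1 := hfin t0 ht0
    have hBβ : B / β ≤ 1 / 2 := by
      rw [div_le_div_iff₀ hβ0 (by norm_num)]; linarith
    have h2 : m0 ≤ (N + B * m * (Real.exp (β * t0) / β)) * Real.exp (-(β * t0)) := by
      rw [hm0]; gcongr
    have h3 : (N + B * m * (Real.exp (β * t0) / β)) * Real.exp (-(β * t0)) =
        N * Real.exp (-(β * t0)) + m * (B / β) := by
      rw [Real.exp_neg]; field_simp
    have h4 : N * Real.exp (-(β * t0)) ≤ N := by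
      refine mul_le_of_le_one_right hN0 ?_
      have := ht0.1
      simp; positivity
    have h5 : m * (B / β) ≤ m * (1 / 2) := by gcongr
    linarith
  have hm2 : m ≤ 2 * N := by
    rcases max_choice m0 N with hc | hc
    · rw [← hm] at hc; linarith
    · rw [← hm] at hc; linarith
  calc ‖y T‖ ≤ m * Real.exp (β * T) := hb T ⟨hT, le_rfl⟩
    _ ≤ 2 * N * Real.exp (β * T) := by gcongr
    _ = _ := by ring


lemma chi_exists : ∃ χ χ' : ℝ → ℝ, ∃ X : ℝ, 0 ≤ X ∧ Continuous χ ∧ Continuous χ' ∧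
    (∀ t, HasDerivAt χ (χ' t) t) ∧ (∀ t, t ≤ 1 → χ t = 0) ∧ (∀ t, 2 ≤ t → χ t = 1) ∧
    (∀ t, 0 ≤ χ t) ∧ (∀ t, χ t ≤ 1) ∧ (∀ t, ‖χ' t‖ ≤ X) ∧ (∀ t, t < 1 → χ' t = 0) ∧
    (∀ t, 2 < t → χ' t = 0) := by
  set χ : ℝ → ℝ := fun t => Real.smoothTransition (t - 1) with hχ
  have hcd : ContDiff ℝ 1 χ := Real.smoothTransition.contDiff.comp (by fun_prop)
  have hc' : Continuous (deriv χ) := hcd.continuous_deriv le_rfl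
  have z1 : ∀ t, t ≤ 1 → χ t = 0 := fun t ht =>
    Real.smoothTransition.zero_of_nonpos (by linarith)
  have z2 : ∀ t, 2 ≤ t → χ t = 1 := fun t ht =>
    Real.smoothTransition.one_of_one_le (by linarith)
  have d1 : ∀ t, t < 1 → deriv χ t = 0 := fun t ht => by
    have : χ =ᶠ[nhds t] fun _ => 0 := by
      filter_upwards [Iio_mem_nhds ht] with x hx using z1 x (le_of_lt hx)
    rw [this.deriv_eq]; simp
  have d2 : ∀ t, 2 < t → deriv χ t = 0 := fun t ht => by
    have : χ =ᶠ[nhds t] fun _ => 1 := by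
      filter_upwards [Ioi_mem_nhds ht] with x hx using z2 x (le_of_lt hx)
    rw [this.deriv_eq]; simp
  have hcs : HasCompactSupport (deriv χ) := by
    refine HasCompactSupport.intro (isCompact_Icc (a := (1 : ℝ)) (b := 2)) fun t ht => ?_
    simp only [Set.mem_Icc, not_and_or, not_le] at ht
    rcases ht with ht | ht
    · exact d1 t ht
    · exact d2 t ht
  obtain ⟨X, hX⟩ := hc'.bounded_above_of_compact_support hcs
  exact ⟨χ, deriv χ, X, (norm_nonneg _).trans (hX 0), hcd.continuous, hc',
    fun t => (hcd.differentiable (by norm_num) t).hasDerivAt, z1, z2,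
    fun t => Real.smoothTransition.nonneg _, fun t => Real.smoothTransition.le_one _, hX, d1, d2⟩

lemma step (L : ι → E →L[ℂ] E) (h : ι → ℝ) (hh : ∀ i, 0 ≤ h i) (C : ℝ) (hC : 0 ≤ C)
    (H : ℝ) (hH0 : 0 ≤ H) (hH : ∀ i, h i ≤ H)
    (hres : ∀ s : ℂ, 0 ≤ s.re → ∀ v : E,
      ‖v‖ ≤ C * ‖s • v - ∑ i, Complex.exp (-(h i : ℂ) * s) • L i v‖) (S : ℝ) (hS0 : 0 ≤ S) :
    ∃ D : ℝ, 0 ≤ D ∧ ∀ σ σ' K : ℝ, 0 ≤ σ → σ ≤ S → σ' < σ → ∀ y : ℝ → E, IsSol L h H y →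
      ∀ N : ℝ, (∀ τ ∈ Set.Icc (-H) 0, ‖y τ‖ ≤ N) →
      (∀ t, 0 ≤ t → ‖y t‖ ≤ K * Real.exp (σ' * t)) →
      ∀ t, 2 ≤ t → t * (Real.exp (-σ * t) * ‖y t‖) ≤ D * N := by
  obtain ⟨χ, χ', X, hX0, hχc, hχc', hχd, hχ0, hχ1, hχnn, hχle, hχX, hχ'1, hχ'2⟩ := chi_exists
  set B := ∑ i, ‖L i‖ with hBdef
  have hB0 : 0 ≤ B := Finset.sum_nonneg fun i _ => norm_nonneg _
  set R := 2 * Real.exp ((2 * B + 1) * (2 + H)) with hR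
  have hR1 : 1 ≤ R := by
    have : 1 ≤ Real.exp ((2 * B + 1) * (2 + H)) := Real.one_le_exp (by positivity)
    linarith
  set q := Real.sqrt (2 + H) with hq
  refine ⟨(C + S * C + B * C + 1) * ((C + H * B * C + (2 + H)) * ((X + B) * R * q)),
    by positivity, ?_⟩
  intro σ σ' K hσ hσS hσ' y hy N hN hK t ht
  have hN0 : 0 ≤ N := (norm_nonneg _).trans (hN 0 ⟨by linarith, le_rfl⟩)
  have hK0 : 0 ≤ K := by
    have := (norm_nonneg _).trans (hK 0 le_rfl)
    simpa using this
  have hyR : ∀ t ∈ Set.Icc (-H) (2 + H), ‖y t‖ ≤ R * N := by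
    intro t ht
    rcases le_total t 0 with h0 | h0
    · exact (hN t ⟨ht.1, h0⟩).trans (le_mul_of_one_le_left hN0 hR1)
    · refine (hy.gronwall hh hH0 hH N hN t h0).trans ?_
      rw [hR]
      have := ht.2
      gcongr
  set ex : ℝ → ℂ := fun t => Complex.exp (-(σ : ℂ) * t) with hex
  have hexc : Continuous ex := by fun_prop
  have hexn : ∀ t, ‖ex t‖ = Real.exp (-σ * t) := by
    intro t; simp [hex, Complex.norm_exp]
  have hexd : ∀ t, HasDerivAt ex (-(σ : ℂ) * ex t) t := by
    intro t
    have hid : HasDerivAt (fun t : ℝ => (t : ℂ)) 1 t := by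
      simpa using (hasDerivAt_id t).ofReal_comp
    have := (hid.const_mul (-(σ : ℂ))).cexp
    refine this.congr_deriv ?_
    simp [hex, mul_comm]
  set w : ℝ → E := fun t => (ex t * (χ t : ℂ)) • y t with hw
  set F : ℝ → E := fun t => ex t • ((χ' t : ℂ) • y t +
    ∑ i, ((χ t : ℂ) - (χ (t - h i) : ℂ)) • L i (y (t - h i))) with hF
  have hw0 : ∀ t, t ≤ 1 → w t = 0 := by
    intro t ht; simp [hw, hχ0 t ht]
  have hF0 : ∀ t, t < 1 → F t = 0 := by
    intro t ht
    have : ∀ i, χ (t - h i) = 0 := fun i => hχ0 _ (by linarith [hh i])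
    simp [hF, hχ0 t ht.le, hχ'1 t ht, this]
  have hF1 : ∀ t, 2 + H < t → F t = 0 := by
    intro t ht
    have : ∀ i, χ (t - h i) = 1 := fun i => hχ1 _ (by linarith [hH i])
    simp [hF, hχ1 t (by linarith), hχ'2 t (by linarith), this]
  have hFz : ∀ t, t ∉ Set.Icc 0 (2 + H) → F t = 0 := by
    intro t ht
    simp only [Set.mem_Icc, not_and_or, not_le] at ht
    rcases ht with ht | ht
    · exact hF0 t (by linarith)
    · exact hF1 t ht
  have hFb : ∀ t, ‖F t‖ ≤ (X + B) * R * N := by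
    intro t
    by_cases ht : t ∈ Set.Icc 0 (2 + H)
    · rw [hF, norm_smul, hexn]
      have h1 : Real.exp (-σ * t) ≤ 1 := by
        have := ht.1
        simp; positivity
      have h2 : ‖(χ' t : ℂ) • y t‖ ≤ X * (R * N) := by
        rw [norm_smul]
        gcongr
        · simpa using hχX t
        · exact hyR t ⟨by linarith [ht.1], ht.2⟩
      have h3 : ‖∑ i, ((χ t : ℂ) - (χ (t - h i) : ℂ)) • L i (y (t - h i))‖ ≤ B * (R * N) := by
        refine (norm_sum_le _ _).trans ?_
        rw [hBdef, Finset.sum_mul]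
        refine Finset.sum_le_sum fun i _ => ?_
        rw [norm_smul]
        have h4 : ‖(χ t : ℂ) - (χ (t - h i) : ℂ)‖ ≤ 1 := by
          rw [← Complex.ofReal_sub, Complex.norm_real, Real.norm_eq_abs, abs_le]
          constructor <;> linarith [hχnn t, hχle t, hχnn (t - h i), hχle (t - h i)]
        have h5 : ‖L i (y (t - h i))‖ ≤ ‖L i‖ * (R * N) := by
          refine ((L i).le_opNorm _).trans ?_
          gcongr
          exact hyR _ ⟨by linarith [ht.1, hH i], by linarith [ht.2, hh i]⟩
        calc _ ≤ 1 * (‖L i‖ * (R * N)) := by gcongr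
          _ = _ := one_mul _
      calc _ ≤ 1 * (X * (R * N) + B * (R * N)) := by
            gcongr
            exact (norm_add_le _ _).trans (add_le_add h2 h3)
        _ = _ := by ring
    · rw [hFz t ht, norm_zero]; positivity
  have hFc : Continuous F := by
    rw [continuous_iff_continuousAt]
    intro t
    rcases lt_or_ge t 1 with h1 | h1
    · have : F =ᶠ[nhds t] fun _ => 0 := by
        filter_upwards [Iio_mem_nhds h1] with x hx using hF0 x hx
      exact continuousAt_const.congr this.symm
    · have hyc : ContinuousOn y (Set.Ici 0) := hy.1.mono fun x hx => by
        simp only [Set.mem_Ici] at hx ⊢; linarith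
      have : ContinuousOn F (Set.Ici 0) := by
        refine hexc.continuousOn.smul (ContinuousOn.add ?_ ?_)
        · exact (Complex.continuous_ofReal.comp hχc').continuousOn.smul hyc
        · refine continuousOn_finsetSum _ fun i _ => ContinuousOn.smul ?_ ?_
          · fun_prop
          · exact (L i).continuous.comp_continuousOn (hy.delay_cont hH i)
      exact this.continuousAt (Ici_mem_nhds (by linarith))
  have hwd : ∀ t, HasDerivAt w (-(σ : ℂ) • w t +
      ∑ i, Complex.exp (-(h i : ℂ) * σ) • L i (w (t - h i)) + F t) t := by
    intro t
    rcases lt_or_ge t 1 with h1 | h1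
    · have e : w =ᶠ[nhds t] fun _ => 0 := by
        filter_upwards [Iio_mem_nhds h1] with x hx using hw0 x (le_of_lt hx)
      have z : ∀ i, w (t - h i) = 0 := fun i => hw0 _ (by linarith [hh i])
      have := (hasDerivAt_const t (0 : E)).congr_of_eventuallyEq e
      refine this.congr_deriv ?_
      simp [z, hw0 t h1.le, hF0 t h1]
    · have hd1 := ((hexd t).mul (hχd t).ofReal_comp).smul (hy.2 t (by linarith))
      refine hd1.congr_deriv ?_
      have e1 : ∀ i, Complex.exp (-(h i : ℂ) * σ) • L i (w (t - h i)) =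
          (ex t * (χ (t - h i) : ℂ)) • L i (y (t - h i)) := by
        intro i
        simp only [hw, map_smul, smul_smul, hex, ← mul_assoc, ← Complex.exp_add]
        congr 3
        push_cast
        ring
      rw [Finset.sum_congr rfl fun i _ => e1 i]
      simp only [hF, smul_add, Finset.smul_sum, smul_smul, hw, mul_sub, sub_smul,
        Finset.sum_sub_distrib, add_smul, smul_sub, Pi.mul_apply, mul_assoc]
      abel
  have hwc : Continuous w := continuous_iff_continuousAt.2 fun t => (hwd t).continuousAt
  have hη : 0 < σ - σ' := by linarith
  have hwb : ∀ t, 0 ≤ t → ‖w t‖ ≤ K * Real.exp (-(σ - σ') * t) := by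
    intro t ht
    rw [hw, norm_smul, norm_mul, hexn]
    have h1 : ‖(χ t : ℂ)‖ ≤ 1 := by
      rw [Complex.norm_real, Real.norm_of_nonneg (hχnn t)]; exact hχle t
    calc _ ≤ Real.exp (-σ * t) * 1 * (K * Real.exp (σ' * t)) := by
          gcongr
          exact hK t ht
      _ = K * (Real.exp (-σ * t) * Real.exp (σ' * t)) := by ring
      _ = _ := by rw [← Real.exp_add]; ring_nf
  have htwb : ∀ t : ℝ, 0 ≤ t → ‖(t : ℂ) • w t‖ ≤
      (K * (2 / (σ - σ'))) * Real.exp (-((σ - σ') / 2) * t) := by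
    intro t ht
    rw [norm_smul, Complex.norm_real, Real.norm_of_nonneg ht]
    have h1 : t ≤ (2 / (σ - σ')) * Real.exp ((σ - σ') / 2 * t) := by
      have := Real.add_one_le_exp ((σ - σ') / 2 * t)
      have h2 : (σ - σ') / 2 * t ≤ Real.exp ((σ - σ') / 2 * t) := by linarith
      calc t = (2 / (σ - σ')) * ((σ - σ') / 2 * t) := by field_simp
        _ ≤ _ := by gcongr
    calc _ ≤ (2 / (σ - σ')) * Real.exp ((σ - σ') / 2 * t) * (K * Real.exp (-(σ - σ') * t)) := by
          gcongr
          exact hwb t ht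
      _ = (K * (2 / (σ - σ'))) * (Real.exp ((σ - σ') / 2 * t) * Real.exp (-(σ - σ') * t)) := by ring
      _ = _ := by rw [← Real.exp_add]; ring_nf
  obtain ⟨iw, mw⟩ := decay_memLp w hwc (fun t ht => hw0 t (by linarith)) K _ hη hwb
  obtain ⟨itw, mtw⟩ := decay_memLp (fun t : ℝ => (t : ℂ) • w t) (by fun_prop)
    (fun t ht => by rw [hw0 t (by linarith), smul_zero]) _ _ (half_pos hη) htwb
  obtain ⟨iF, mF, bF⟩ := compact_bound F hFc (2 + H) ((X + B) * R * N) (by positivity)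
    (by positivity) hFz hFb
  obtain ⟨itF, mtF, btF⟩ := compact_bound (fun t : ℝ => (t : ℂ) • F t) (by fun_prop) (2 + H)
    ((2 + H) * ((X + B) * R * N)) (by positivity) (by positivity)
    (fun t ht => by rw [hFz t ht, smul_zero]) (fun t => by
      by_cases ht : t ∈ Set.Icc 0 (2 + H)
      · rw [norm_smul, Complex.norm_real, Real.norm_of_nonneg ht.1]
        have := ht.2
        gcongr
        exact hFb t
      · rw [hFz t ht, smul_zero, norm_zero]; positivity)
  have key := main_bound2 L h hh C hC H hH0 hH hres σ S hσ hσS w F iw mw iF mF (hw0 0 (by norm_num))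
    hwd itw mtw itF mtF ((X + B) * R * N * q) (by positivity) bF (2 + H) (by positivity)
    (by rw [← mul_assoc]; exact btF) t (by linarith)
  rw [norm_smul, Complex.norm_real, Real.norm_of_nonneg (by linarith : (0 : ℝ) ≤ t), hw] at key
  simp only [hχ1 t ht, Complex.ofReal_one, mul_one, norm_smul, hexn] at key
  refine key.trans (le_of_eq ?_)
  ring


lemma iter_bound (L : ι → E →L[ℂ] E) (h : ι → ℝ) (hh : ∀ i, 0 ≤ h i)
    (H : ℝ) (hH0 : 0 ≤ H) (hH : ∀ i, h i ≤ H) (T μ : ℝ) (hT : 0 < T)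
    (hA : ∀ y : ℝ → E, IsSol L h H y → ∀ N : ℝ, (∀ τ ∈ Set.Icc (-H) 0, ‖y τ‖ ≤ N) →
      ∀ t ∈ Set.Icc (T - H) T, ‖y t‖ ≤ Real.exp (μ * T) * N) :
    ∃ K : ℝ, 0 < K ∧ ∀ y : ℝ → E, IsSol L h H y → ∀ N : ℝ,
      (∀ τ ∈ Set.Icc (-H) 0, ‖y τ‖ ≤ N) → ∀ t, 0 ≤ t → ‖y t‖ ≤ K * Real.exp (μ * t) * N := by
  set B := ∑ i, ‖L i‖ with hBdef
  have hB0 : 0 ≤ B := Finset.sum_nonneg fun i _ => norm_nonneg _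
  refine ⟨2 * Real.exp ((2 * B + 1) * T) * Real.exp (|μ| * T), by positivity, ?_⟩
  intro y hy N hN t ht
  have hN0 : 0 ≤ N := (norm_nonneg _).trans (hN 0 ⟨by linarith, le_rfl⟩)
  have hk : ∀ k : ℕ, ∀ τ ∈ Set.Icc (-H) 0, ‖y (τ + k * T)‖ ≤ Real.exp (μ * (k * T)) * N := by
    intro k
    induction k with
    | zero => simpa using hN
    | succ k ih =>
      intro τ hτ
      have := hA _ (hy.shift (k * T) (by positivity)) _ ih (τ + T)
        ⟨by linarith [hτ.1], by linarith [hτ.2]⟩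
      have e : τ + T + k * T = τ + ((k + 1 : ℕ) : ℝ) * T := by push_cast; ring
      rw [e] at this
      refine this.trans (le_of_eq ?_)
      rw [← mul_assoc, ← Real.exp_add]
      push_cast
      ring_nf
  set k := ⌊t / T⌋₊ with hkdef
  have h1 : (k : ℝ) * T ≤ t := by
    rw [← le_div_iff₀ hT]; exact Nat.floor_le (by positivity)
  have h2 : t < ((k : ℝ) + 1) * T := by
    rw [← div_lt_iff₀ hT]; exact Nat.lt_floor_add_one _
  have h3 := (hy.shift (k * T) (by positivity)).gronwall hh hH0 hH _ (hk k) (t - k * T)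
    (by linarith)
  simp only [sub_add_cancel, ← hBdef] at h3
  refine h3.trans ?_
  have h4 : Real.exp (μ * (k * T)) ≤ Real.exp (|μ| * T) * Real.exp (μ * t) := by
    rw [← Real.exp_add]
    gcongr
    have h5 : -μ * (t - k * T) ≤ |μ| * T := by
      calc -μ * (t - k * T) ≤ |μ| * (t - k * T) := by
            gcongr
            exact neg_le_abs μ
        _ ≤ |μ| * T := by
            gcongr
            linarith
    linarith
  have h6 : Real.exp ((2 * B + 1) * (t - k * T)) ≤ Real.exp ((2 * B + 1) * T) := by
    gcongr
    linarith
  calc _ ≤ 2 * Real.exp ((2 * B + 1) * T) * (Real.exp (|μ| * T) * Real.exp (μ * t) * N) := by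
        gcongr
    _ = _ := by ring

lemma stable (L : ι → E →L[ℂ] E) (h : ι → ℝ) (hh : ∀ i, 0 ≤ h i) (C : ℝ) (hC : 0 ≤ C)
    (H : ℝ) (hH0 : 0 ≤ H) (hH : ∀ i, h i ≤ H)
    (hres : ∀ s : ℂ, 0 ≤ s.re → ∀ v : E,
      ‖v‖ ≤ C * ‖s • v - ∑ i, Complex.exp (-(h i : ℂ) * s) • L i v‖) :
    ∃ K : ℝ, 0 < K ∧ ∃ c : ℝ, 0 < c ∧ ∀ y : ℝ → E, IsSol L h H y → ∀ N : ℝ,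
      (∀ τ ∈ Set.Icc (-H) 0, ‖y τ‖ ≤ N) → ∀ t, 0 ≤ t → ‖y t‖ ≤ K * Real.exp (-c * t) * N := by
  set B := ∑ i, ‖L i‖ with hBdef
  have hB0 : 0 ≤ B := Finset.sum_nonneg fun i _ => norm_nonneg _
  set β := 2 * B + 1 with hβ
  have hβ0 : 0 < β := by positivity
  obtain ⟨D, hD0, hD⟩ := step L h hh C hC H hH0 hH hres (β + 1) (by positivity)
  set T := H + 2 + D * Real.exp 2 with hT
  have hT2 : 2 ≤ T - H := by
    have : 0 ≤ D * Real.exp 2 := by positivity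
    linarith
  have hT0 : 0 < T := by linarith
  set η := 1 / T with hη
  have hη0 : 0 < η := by positivity
  have hη1 : η ≤ 1 := by
    rw [hη, div_le_one hT0]; linarith
  set P : ℝ → Prop := fun σ => ∃ K : ℝ, 0 < K ∧ ∀ y : ℝ → E, IsSol L h H y → ∀ N : ℝ,
      (∀ τ ∈ Set.Icc (-H) 0, ‖y τ‖ ≤ N) → ∀ t, 0 ≤ t → ‖y t‖ ≤ K * Real.exp (σ * t) * N with hP
  have hstart : P β := ⟨2, by norm_num, fun y hy N hN t ht => hy.gronwall hh hH0 hH N hN t ht⟩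
  have hstep : ∀ σ, 0 ≤ σ → σ ≤ β → P σ → P (σ - η) := by
    rintro σ hσ hσβ ⟨K, hK0, hK⟩
    refine iter_bound L h hh H hH0 hH T (σ - η) hT0 fun y hy N hN t ht => ?_
    have hN0 : 0 ≤ N := (norm_nonneg _).trans (hN 0 ⟨by linarith, le_rfl⟩)
    have ht2 : 2 ≤ t := hT2.trans ht.1
    have h1 := hD (σ + η) σ (K * N) (by positivity) (by linarith) (by linarith) y hy N hN
      (fun t ht => (hK y hy N hN t ht).trans (le_of_eq (by ring))) t ht2
    have h2 : D * Real.exp 2 ≤ t := by linarith [ht.1]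
    have h3 : t * (Real.exp (-(σ + η) * t) * ‖y t‖) ≤ t * (Real.exp (-2) * N) := by
      refine h1.trans ?_
      have : D = D * Real.exp 2 * Real.exp (-2) := by
        rw [mul_assoc, ← Real.exp_add]; simp
      rw [this, ← mul_assoc]
      gcongr
    have h4 := le_of_mul_le_mul_left h3 (by linarith)
    have h5 : ‖y t‖ = Real.exp ((σ + η) * t) * (Real.exp (-(σ + η) * t) * ‖y t‖) := by
      have e0 : (σ + η) * t + -(σ + η) * t = 0 := by ring
      rw [← mul_assoc, ← Real.exp_add, e0]; simp
    rw [h5]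
    calc _ ≤ Real.exp ((σ + η) * T) * (Real.exp (-2) * N) := by
          have := ht.2
          gcongr
      _ = Real.exp ((σ - η) * T) * N := by
          rw [← mul_assoc, ← Real.exp_add]
          congr 2
          rw [hη]
          field_simp
          ring
  have hind : ∀ k : ℕ, k * η ≤ β → P (β - k * η) := by
    intro k
    induction k with
    | zero => intro _; simpa using hstart
    | succ k ih =>
      intro hk
      push_cast at hk ⊢
      have hk' : (k : ℝ) * η ≤ β := by linarith
      have := hstep _ (by linarith) (by linarith [(by positivity : 0 ≤ (k : ℝ) * η)]) (ih hk')
      convert this using 1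
      ring
  set k := ⌊β / η⌋₊ with hkdef
  have h1 : (k : ℝ) * η ≤ β := by
    rw [← le_div_iff₀ hη0]; exact Nat.floor_le (by positivity)
  have h2 : β < ((k : ℝ) + 1) * η := by
    rw [← div_lt_iff₀ hη0]; exact Nat.lt_floor_add_one _
  obtain ⟨K, hK0, hK⟩ := hstep _ (by linarith) (by linarith [(by positivity : 0 ≤ (k : ℝ) * η)])
    (hind k h1)
  refine ⟨K, hK0, ((k : ℝ) + 1) * η - β, by linarith, fun y hy N hN t ht => ?_⟩
  have e : -(((k : ℝ) + 1) * η - β) = β - k * η - η := by ring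
  rw [e]
  exact hK y hy N hN t ht

end DDE


/-- If every characteristic zero has real part `≤ -ρ < 0`, the limiting equation
is globally uniformly exponentially stable. -/
theorem stmt9 {n m : ℕ} (hn : 1 ≤ n) (hm : 1 ≤ m)
    (A : Fin (m + 1) → Matrix (Fin n) (Fin n) ℂ)
    (hd : Fin (m + 1) → ℝ) (hd0 : hd 0 = 0) (hdnn : ∀ i, 0 ≤ hd i)
    (H : ℝ) (hH : IsGreatest (Set.range hd) H)
    (ρ : ℝ) (hρ : 0 < ρ)
    (hneg : ∀ z : ℂ, charFn A hd z = 0 → z.re ≤ -ρ) :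
    ∃ M > 0, ∃ c > 0, ∀ y : ℝ → EuclideanSpace ℂ (Fin n),
      ContinuousOn y (Set.Ici (-H)) →
      (∀ t > 0, HasDerivAt y (∑ i, mulVecE (A i) (y (t - hd i))) t) →
      ∀ t, 0 ≤ t →
        ‖y t‖ ≤ M * Real.exp (-c * t) * sSup ((fun τ => ‖y τ‖) '' Set.Icc (-H) 0) := by

  have hH' : ∀ i, hd i ≤ H := fun i => hH.2 ⟨i, rfl⟩
  have hH0 : 0 ≤ H := hd0 ▸ hH' 0
  set L : Fin (m + 1) → EuclideanSpace ℂ (Fin n) →L[ℂ] EuclideanSpace ℂ (Fin n) :=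
    fun i => (Matrix.toEuclideanLin (A i)).toContinuousLinearMap with hLdef
  have hLe : ∀ i v, L i v = mulVecE (A i) v := fun i v => rfl
  have hinj : ∀ s : ℂ, 0 ≤ s.re → ∀ v : EuclideanSpace ℂ (Fin n),
      s • v - ∑ i, Complex.exp (-(hd i : ℂ) * s) • L i v = 0 → v = 0 := by
    intro s hs v hv
    by_contra hne
    have hdet : charFn A hd s = 0 := by
      refine Matrix.exists_mulVec_eq_zero_iff.1 ⟨WithLp.ofLp v, fun h0 => hne ?_, ?_⟩
      · ext i; simpa using congrFun h0 i
      · have := congrArg WithLp.ofLp hv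
        rw [Matrix.sub_mulVec, Matrix.smul_mulVec, Matrix.one_mulVec, Matrix.sum_mulVec]
        simpa [hLe, mulVecE, Matrix.smul_mulVec] using this
    linarith [hneg s hdet]
  obtain ⟨C, hC, hres⟩ := resolvent_bound L hd hdnn hinj
  obtain ⟨K, hK, c, hc, hst⟩ := stable L hd hdnn C hC.le H hH0 hH' hres
  refine ⟨K, hK, c, hc, fun y hyc hyd t ht => ?_⟩
  refine hst y ⟨hyc, hyd⟩ _ (fun τ hτ => ?_) t ht
  refine le_csSup ?_ ⟨τ, hτ, rfl⟩
  exact (isCompact_Icc.image_of_continuousOn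
    (hyc.mono fun x hx => hx.1).norm).bddAbove
end
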